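/- arXiv:1402.6957 — 2 statements merged into one kernel-verified Lean document; each statement's English description precedes it below -/
import Mathlib

section
/- Let R be a ring and let {U_i : i ∈ I} and {V_j : j ∈ J} be two families of nonzero uniserial right R-modules. Let I' be the set of all indices i ∈ I with U_i quasismall and J' the set of all j ∈ J with V_j quasismall. Then ⨁_{i∈I} U_i ≅ ⨁_{j∈J} V_j if and only if there exist a bijection σ : I → J such that U_i and V_{σ(i)} belong to the same monogeny class for every i ∈ I, and a bijection τ : I' → J' such that U_i and V_{τ(i)} belong to the same epigeny class for every i ∈ I'. -/
universe u v w

/-- Two modules belong to the same monogeny class if there are injective homomorphisms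
in both directions. -/
def SameMonogenyClass (R : Type*) [Ring R] (M N : Type*) [AddCommGroup M] [Module R M]
    [AddCommGroup N] [Module R N] : Prop :=
  (∃ f : M →ₗ[R] N, Function.Injective f) ∧ ∃ g : N →ₗ[R] M, Function.Injective g

/-- Two modules belong to the same epigeny class if there are surjective homomorphisms
in both directions. -/
def SameEpigenyClass (R : Type*) [Ring R] (M N : Type*) [AddCommGroup M] [Module R M]
    [AddCommGroup N] [Module R N] : Prop :=
  (∃ f : M →ₗ[R] N, Function.Surjective f) ∧ ∃ g : N →ₗ[R] M, Function.Surjective g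

/-- A module is uniserial if its lattice of submodules is linearly ordered by inclusion. -/
def IsUniserialModule (R : Type*) [Ring R] (M : Type*) [AddCommGroup M] [Module R M] : Prop :=
  ∀ N P : Submodule R M, N ≤ P ∨ P ≤ N

/-- `N` is (isomorphic to) a direct summand of `X` iff the identity of `N` factors
through `X`. -/
def IsDirectSummandOf (R : Type*) [Ring R] (N X : Type*) [AddCommGroup N] [Module R N]
    [AddCommGroup X] [Module R X] : Prop :=
  ∃ (f : N →ₗ[R] X) (g : X →ₗ[R] N), g.comp f = LinearMap.id

/-- A module `N` is quasismall if whenever `N` is isomorphic to a direct summand of a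
direct sum `⨁_{k ∈ K} M k`, it is already isomorphic to a direct summand of a finite
subsum `⨁_{k ∈ F} M k`. -/
def IsQuasismall (R : Type u) [Ring R] (N : Type v) [AddCommGroup N] [Module R N] : Prop :=
  ∀ (K : Type w) (M : K → Type w) (_ : ∀ k, AddCommGroup (M k)) (_ : ∀ k, Module R (M k)),
    IsDirectSummandOf R N (DirectSum K M) →
      ∃ F : Finset K, IsDirectSummandOf R N (DirectSum {k // k ∈ F} (fun k => M k))

/-!
If `U` is a uniserial summand of `⨁ V j`, then some endomorphism `U → V j → U` is injective and,
provided `U` is quasismall, some such endomorphism is surjective. This produces a `V j` in the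
monogeny class, respectively epigeny class, of `U`. Each `V j` arises from only countably many
summands, so a class of infinite size has the same size on both sides. For a class of finite size,
monogeny classes are compared in the modular lattice of submodules: `n` independent nonzero
submodules on which finitely many kernels with uniserial quotient meet trivially are at most as
many as those kernels. Epigeny classes are compared by cancelling the quasismall summands one at a
time.

Conversely, let `f : U → X` and `c : U → X'` be injective and surjective, respectively. Exchanging
`U` against `X ⊕ X'` leaves a uniserial module in the monogeny class of `X'` and the epigeny class
of `X`. Hence two families matched by one permutation for monogeny and another one for epigeny are
isomorphic when the latter is an involution, and every permutation is a product of two involutions.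
A uniserial module which is not quasismall is countably generated, and its epigeny class is
determined by its monogeny class and carries no information in the presence of infinitely many
quasismall summands: by an Eilenberg swindle the exchange is repeated along an infinite chain,
the remainder being chosen to vanish in the limit.
-/

/-! ### Homomorphisms between uniserial modules -/

section Uniserial

variable {R : Type*} [Ring R] {M N P : Type*} [AddCommGroup M] [Module R M]
  [AddCommGroup N] [Module R N] [AddCommGroup P] [Module R P]

namespace SameMonogenyClass

theorem refl : SameMonogenyClass R M M :=
  ⟨⟨LinearMap.id, Function.injective_id⟩, ⟨LinearMap.id, Function.injective_id⟩⟩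

theorem symm (h : SameMonogenyClass R M N) : SameMonogenyClass R N M := ⟨h.2, h.1⟩

theorem trans (h : SameMonogenyClass R M N) (h' : SameMonogenyClass R N P) :
    SameMonogenyClass R M P := by
  obtain ⟨⟨f, hf⟩, ⟨g, hg⟩⟩ := h
  obtain ⟨⟨f', hf'⟩, ⟨g', hg'⟩⟩ := h'
  exact ⟨⟨f'.comp f, hf'.comp hf⟩, ⟨g.comp g', hg.comp hg'⟩⟩

theorem of_linearEquiv (e : M ≃ₗ[R] N) : SameMonogenyClass R M N :=
  ⟨⟨e.toLinearMap, e.injective⟩, ⟨e.symm.toLinearMap, e.symm.injective⟩⟩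

end SameMonogenyClass

namespace SameEpigenyClass

theorem refl : SameEpigenyClass R M M :=
  ⟨⟨LinearMap.id, Function.surjective_id⟩, ⟨LinearMap.id, Function.surjective_id⟩⟩

theorem symm (h : SameEpigenyClass R M N) : SameEpigenyClass R N M := ⟨h.2, h.1⟩

theorem trans (h : SameEpigenyClass R M N) (h' : SameEpigenyClass R N P) :
    SameEpigenyClass R M P := by
  obtain ⟨⟨f, hf⟩, ⟨g, hg⟩⟩ := h
  obtain ⟨⟨f', hf'⟩, ⟨g', hg'⟩⟩ := h'
  exact ⟨⟨f'.comp f, hf'.comp hf⟩, ⟨g.comp g', hg.comp hg'⟩⟩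

theorem of_linearEquiv (e : M ≃ₗ[R] N) : SameEpigenyClass R M N :=
  ⟨⟨e.toLinearMap, e.surjective⟩, ⟨e.symm.toLinearMap, e.symm.surjective⟩⟩

end SameEpigenyClass

namespace IsUniserialModule

theorem of_injective (hN : IsUniserialModule R N) {f : M →ₗ[R] N}
    (hf : Function.Injective f) : IsUniserialModule R M := fun A B =>
  (hN (A.map f) (B.map f)).imp (Submodule.map_le_map_iff_of_injective hf _ _).1
    (Submodule.map_le_map_iff_of_injective hf _ _).1

theorem exists_smul_eq_or (hM : IsUniserialModule R M) (x y : M) :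
    (∃ r : R, r • x = y) ∨ ∃ r : R, r • y = x := by
  simpa only [Submodule.span_singleton_le_iff_mem, Submodule.mem_span_singleton, or_comm]
    using hM (R ∙ x) (R ∙ y)

theorem le_span_singleton_of_notMem (hM : IsUniserialModule R M) {A : Submodule R M} {x : M}
    (hx : x ∉ A) : A ≤ R ∙ x :=
  (hM A (R ∙ x)).resolve_right fun h => hx (h (Submodule.mem_span_singleton_self x))

theorem infIrred_ker [Nontrivial N] (hN : IsUniserialModule R N) {f : M →ₗ[R] N}
    (hf : Function.Surjective f) : InfIrred (LinearMap.ker f) := by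
  refine ⟨fun h => ?_, fun A B hAB => ?_⟩
  · rw [isMax_iff_eq_top, LinearMap.ker_eq_top] at h
    obtain ⟨y, hy⟩ := exists_ne (0 : N)
    obtain ⟨x, rfl⟩ := hf y
    exact hy (by simp [h])
  · have hA : LinearMap.ker f ≤ A := hAB ▸ inf_le_left
    have hB : LinearMap.ker f ≤ B := hAB ▸ inf_le_right
    refine (hN (A.map f) (B.map f)).imp (fun h => ?_) fun h => ?_
    · rw [LinearMap.map_le_map_iff, sup_eq_left.2 hB] at h
      rw [← hAB, inf_eq_left.2 h]
    · rw [LinearMap.map_le_map_iff, sup_eq_left.2 hA] at h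
      rw [← hAB, inf_eq_right.2 h]

theorem injective_or_injective (hM : IsUniserialModule R M) {f : M →ₗ[R] N} {g : M →ₗ[R] P}
    (h : ∀ x, f x = 0 → g x = 0 → x = 0) : Function.Injective f ∨ Function.Injective g := by
  simp only [← LinearMap.ker_eq_bot, eq_bot_iff]
  rcases hM (LinearMap.ker f) (LinearMap.ker g) with h' | h'
  · exact Or.inl fun x hx => h x hx (h' hx)
  · exact Or.inr fun x hx => h x (h' hx) hx

theorem surjective_or_surjective (hP : IsUniserialModule R P) {f : M →ₗ[R] P} {g : N →ₗ[R] P}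
    (h : ∀ y, ∃ a b, f a + g b = y) : Function.Surjective f ∨ Function.Surjective g := by
  simp only [← LinearMap.range_eq_top, eq_top_iff]
  rcases hP (LinearMap.range f) (LinearMap.range g) with h' | h'
  · refine Or.inr fun y _ => ?_
    obtain ⟨a, b, rfl⟩ := h y
    exact add_mem (h' ⟨a, rfl⟩) ⟨b, rfl⟩
  · refine Or.inl fun y _ => ?_
    obtain ⟨a, b, rfl⟩ := h y
    exact add_mem ⟨a, rfl⟩ (h' ⟨b, rfl⟩)

theorem surjective_or_of_add (hN : IsUniserialModule R N) {f g : M →ₗ[R] N}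
    (h : Function.Surjective (f + g)) : Function.Surjective f ∨ Function.Surjective g :=
  hN.surjective_or_surjective fun y => (h y).imp fun x hx => ⟨x, hx⟩

theorem exists_surjective_of_sum [Nontrivial N] (hN : IsUniserialModule R N)
    {K : Type*} {h : K → M →ₗ[R] N} {s : Finset K}
    (hs : Function.Surjective (∑ k ∈ s, h k : M →ₗ[R] N)) :
    ∃ k ∈ s, Function.Surjective (h k) := by
  classical
  induction s using Finset.induction_on with
  | empty =>
    obtain ⟨x, hx⟩ := exists_ne (0 : N)
    obtain ⟨y, hy⟩ := hs x
    exact absurd (by simpa using hy.symm) hx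
  | insert a s ha ih =>
    rw [Finset.sum_insert ha] at hs
    rcases hN.surjective_or_of_add hs with h' | h'
    · exact ⟨a, by simp, h'⟩
    · obtain ⟨k, hk, hk'⟩ := ih h'
      exact ⟨k, by simp [hk], hk'⟩

theorem injective_left_of_comp [Nontrivial M] (hN : IsUniserialModule R N)
    {f : M →ₗ[R] N} {g : N →ₗ[R] P} (h : Function.Injective (g.comp f)) :
    Function.Injective g := by
  rw [← LinearMap.ker_eq_bot, eq_bot_iff]
  rcases hN (LinearMap.ker g) (LinearMap.range f) with h' | h'
  · intro x hx
    obtain ⟨y, rfl⟩ := h' hx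
    have hy : y = 0 := h (by simpa using hx)
    simp [hy]
  · obtain ⟨x, hx⟩ := exists_ne (0 : M)
    exact absurd (h (by simpa using h' ⟨x, rfl⟩)) hx

theorem surjective_right_of_comp [Nontrivial P] (hN : IsUniserialModule R N)
    {f : M →ₗ[R] N} {g : N →ₗ[R] P} (h : Function.Surjective (g.comp f)) :
    Function.Surjective f := by
  rcases hN (LinearMap.ker g) (LinearMap.range f) with h' | h'
  · intro y
    obtain ⟨x, hx⟩ := h (g y)
    obtain ⟨z, hz⟩ := h' (show y - f x ∈ LinearMap.ker g by simpa [sub_eq_zero] using hx.symm)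
    exact ⟨z + x, by simp [hz]⟩
  · obtain ⟨z, hz⟩ := exists_ne (0 : P)
    obtain ⟨x, rfl⟩ := h z
    exact absurd (h' ⟨x, rfl⟩) hz

theorem bijective_add (hM : IsUniserialModule R M) (hN : IsUniserialModule R N)
    {f g : M →ₗ[R] N} (hf : Function.Injective f) (hf' : ¬ Function.Surjective f)
    (hg : Function.Surjective g) (hg' : ¬ Function.Injective g) :
    Function.Bijective (f + g) := by
  constructor
  · refine (hM.injective_or_injective (g := g) fun x hx hgx => hf ?_).resolve_right hg'
    simpa [hgx] using hx
  · refine (hN.surjective_or_surjective (g := f) fun y => ?_).resolve_right hf'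
    obtain ⟨x, rfl⟩ := hg y
    exact ⟨x, -x, by simp⟩

theorem nonempty_linearEquiv (hM : IsUniserialModule R M) (hN : IsUniserialModule R N)
    {f g : M →ₗ[R] N} (hf : Function.Injective f) (hg : Function.Surjective g) :
    Nonempty (M ≃ₗ[R] N) := by
  by_cases hf' : Function.Surjective f
  · exact ⟨LinearEquiv.ofBijective f ⟨hf, hf'⟩⟩
  by_cases hg' : Function.Injective g
  · exact ⟨LinearEquiv.ofBijective g ⟨hg', hg⟩⟩
  exact ⟨LinearEquiv.ofBijective _ (hM.bijective_add hN hf hf' hg hg')⟩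

theorem surjective_id_sub (hM : IsUniserialModule R M) {s : M →ₗ[R] M}
    (hs : ¬ Function.Surjective s) : Function.Surjective (LinearMap.id - s : M →ₗ[R] M) :=
  (hM.surjective_or_surjective fun y => ⟨y, y, by simp⟩).resolve_right hs

theorem injective_of_forall_smul (hM : IsUniserialModule R M) {f : M →ₗ[R] N} {x : M}
    (hx : x ≠ 0) (h : ∀ r : R, f (r • x) = 0 → r • x = 0) : Function.Injective f := by
  rw [← LinearMap.ker_eq_bot]
  by_contra hne
  obtain ⟨y, hy, hy0⟩ := Submodule.exists_mem_ne_zero_of_ne_bot hne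
  rcases hM.exists_smul_eq_or x y with ⟨r, rfl⟩ | ⟨r, rfl⟩
  · exact hy0 (h r hy)
  · exact hx (by simpa using h 1 (by simp [LinearMap.mem_ker.1 hy]))

theorem injective_of_apply_eq_self (hM : IsUniserialModule R M)
    {f : M →ₗ[R] M} {x : M} (hx : x ≠ 0) (h : f x = x) : Function.Injective f :=
  hM.injective_of_forall_smul hx fun r hr => by rwa [map_smul, h] at hr

theorem exists_smul_ne_zero_forall_eq_zero (hM : IsUniserialModule R M)
    {K : Type*} (s : Finset K) {Q : K → Type*} [∀ k, AddCommGroup (Q k)] [∀ k, Module R (Q k)]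
    (f : ∀ k, M →ₗ[R] Q k) (hf : ∀ k ∈ s, ¬ Function.Injective (f k)) {x : M} (hx : x ≠ 0) :
    ∃ r : R, r • x ≠ 0 ∧ ∀ k ∈ s, f k (r • x) = 0 := by
  classical
  induction s using Finset.induction_on with
  | empty => exact ⟨1, by simpa using hx, by simp⟩
  | insert a s ha ih =>
    obtain ⟨r, hr, h⟩ := ih fun k hk => hf k (by simp [hk])
    obtain ⟨t, ht, hta⟩ : ∃ t : R, f a (t • r • x) = 0 ∧ t • r • x ≠ 0 := by
      by_contra! hcon
      exact hf a (by simp) (hM.injective_of_forall_smul hr hcon)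
    refine ⟨t * r, by rwa [mul_smul], fun k hk => ?_⟩
    rw [mul_smul]
    rcases Finset.mem_insert.1 hk with rfl | hk
    · exact ht
    · rw [map_smul, h k hk, smul_zero]

end IsUniserialModule

end Uniserial

/-! ### Maps into and out of direct sums -/

section DirectSumMaps

open DirectSum Function

variable {R : Type*} [Ring R] {M N : Type*} [AddCommGroup M] [Module R M]
  [AddCommGroup N] [Module R N]
  {K : Type*} {Q : K → Type*} [∀ k, AddCommGroup (Q k)] [∀ k, Module R (Q k)]

theorem finite_setOf_directSum_apply_ne_zero (x : ⨁ k, Q k) : {k | x k ≠ 0}.Finite := by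
  classical
  exact DFinsupp.finite_support x

theorem exists_directSum_coe_eq {x : ∀ k, Q k} (hx : {k | x k ≠ 0}.Finite) :
    ∃ y : ⨁ k, Q k, ⇑y = x := by
  classical
  refine ⟨DirectSum.mk Q hx.toFinset fun k => x k, funext fun k => ?_⟩
  by_cases hk : x k = 0
  · rw [DirectSum.mk_apply_of_notMem (by simpa using hk), hk]
  · exact DirectSum.mk_apply_of_mem (by simpa using hk)

/-- The map to a direct sum whose components are the members of a pointwise finite family. -/
noncomputable def directSumLift (f : ∀ k, M →ₗ[R] Q k) (hf : ∀ m, {k | f k m ≠ 0}.Finite) :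
    M →ₗ[R] ⨁ k, Q k :=
  (LinearEquiv.ofInjective (coeFnLinearMap R (M := Q)) DFunLike.coe_injective).symm.toLinearMap ∘ₗ
    (LinearMap.pi f).codRestrict _ fun m => exists_directSum_coe_eq (hf m)

@[simp]
theorem directSumLift_apply (f : ∀ k, M →ₗ[R] Q k) (hf : ∀ m, {k | f k m ≠ 0}.Finite) (m : M)
    (k : K) : directSumLift f hf m k = f k m :=
  congr_fun (LinearEquiv.ofInjective_symm_apply (f := coeFnLinearMap R (M := Q))
    (h := DFunLike.coe_injective) ⟨_, exists_directSum_coe_eq (hf m)⟩) k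

theorem apply_eq_finsum_apply_lof [DecidableEq K] (g : (⨁ k, Q k) →ₗ[R] N) (x : ⨁ k, Q k) :
    g x = ∑ᶠ k, g (lof R K Q k (x k)) := by
  classical
  rw [finsum_eq_sum_of_support_subset (s := DFinsupp.support x) _ fun k hk => ?_]
  · conv_lhs => rw [← DirectSum.sum_support_of x, map_sum]
    rfl
  · simpa using fun h => hk (by simp [h])

theorem IsDirectSummandOf.of_bijective {f : M →ₗ[R] N} {g : N →ₗ[R] M}
    (h : Bijective (g.comp f)) : IsDirectSummandOf R M N :=
  ⟨f, (LinearEquiv.ofBijective _ h).symm.toLinearMap.comp g,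
    LinearMap.ext (LinearEquiv.ofBijective _ h).symm_apply_apply⟩

theorem IsDirectSummandOf.directSum_of_finsum {φ : M →ₗ[R] M} (hφ : Bijective φ)
    (f : ∀ k, M →ₗ[R] Q k) (hf : ∀ m, {k | f k m ≠ 0}.Finite) (g : ∀ k, Q k →ₗ[R] M)
    (hfg : ∀ m, ∑ᶠ k, g k (f k m) = φ m) : IsDirectSummandOf R M (⨁ k, Q k) := by
  classical
  refine .of_bijective (f := directSumLift f hf) (g := toModule R K M g) ?_
  convert hφ
  ext m
  rw [LinearMap.comp_apply, apply_eq_finsum_apply_lof]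
  simp [hfg]

theorem exists_surjective_comp_lof [Finite K] [DecidableEq K] [Nontrivial N]
    (hN : IsUniserialModule R N) {g : (⨁ k, Q k) →ₗ[R] N} (hg : Surjective g) :
    ∃ k, Surjective (g.comp (lof R K Q k)) := by
  have := Fintype.ofFinite K
  obtain ⟨k, -, hk⟩ := hN.exists_surjective_of_sum (s := Finset.univ)
    (h := fun k => (g.comp (lof R K Q k)).comp (component R K Q k)) fun y => by
      obtain ⟨x, rfl⟩ := hg y
      refine ⟨x, ?_⟩
      rw [apply_eq_finsum_apply_lof g, finsum_eq_sum_of_fintype, LinearMap.sum_apply]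
      rfl
  exact ⟨k, .of_comp hk⟩

end DirectSumMaps

/-! ### Uniserial modules that are not quasismall -/

/-- A sequence of elements generating an increasing sequence of cyclic submodules with union the
whole module. -/
structure IsExhaustion (R : Type*) [Ring R] {M : Type*} [AddCommGroup M] [Module R M]
    (x : ℕ → M) : Prop where
  monotone : Monotone fun n => R ∙ x n
  exists_mem : ∀ y, ∃ n, y ∈ R ∙ x n

/-- The countably generated modules each of whose elements is fixed by a nonsurjective
endomorphism. For nonzero uniserial modules this is the negation of being quasismall, see
`isQuasismall_iff_not_isNonsmall`. -/
def IsNonsmall (R : Type*) [Ring R] (M : Type*) [AddCommGroup M] [Module R M] : Prop :=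
  (∃ x : ℕ → M, IsExhaustion R x) ∧ ∀ y : M, ∃ s : M →ₗ[R] M, ¬ Function.Surjective s ∧ s y = y

section Nonsmall

open DirectSum Function

variable {R : Type*} [Ring R] {M N : Type*} [AddCommGroup M] [Module R M]
  [AddCommGroup N] [Module R N]

theorem eq_of_mem_span_singleton {f g : M →ₗ[R] N} {x y : M} (h : f x = g x) (hy : y ∈ R ∙ x) :
    f y = g y := by
  obtain ⟨r, rfl⟩ := Submodule.mem_span_singleton.1 hy
  rw [map_smul, map_smul, h]

namespace IsExhaustion

variable {x : ℕ → M}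

theorem of_forall_mem_succ (h : ∀ n, x n ∈ R ∙ x (n + 1)) (h' : ∀ y, ∃ n, y ∈ R ∙ x n) :
    IsExhaustion R x :=
  ⟨monotone_nat_of_le_succ fun n => (Submodule.span_singleton_le_iff_mem _ _).2 (h n), h'⟩

theorem mem_of_le (hx : IsExhaustion R x) {m n : ℕ} (h : m ≤ n) {y : M} (hy : y ∈ R ∙ x m) :
    y ∈ R ∙ x n :=
  hx.monotone h hy

theorem comp (hx : IsExhaustion R x) {k : ℕ → ℕ} (hk : Monotone k) (hk' : ∀ n, n ≤ k n) :
    IsExhaustion R (x ∘ k) :=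
  ⟨hx.monotone.comp hk, fun y => (hx.exists_mem y).imp fun n hn => hx.mem_of_le (hk' n) hn⟩

theorem map (hx : IsExhaustion R x) {f : M →ₗ[R] N} (hf : Surjective f) :
    IsExhaustion R (f ∘ x) where
  monotone m n h := by
    simpa [LinearMap.map_span] using Submodule.map_mono (f := f) (hx.monotone h)
  exists_mem y := by
    obtain ⟨y, rfl⟩ := hf y
    obtain ⟨n, hn⟩ := hx.exists_mem y
    exact ⟨n, by simpa [LinearMap.map_span] using Submodule.mem_map_of_mem (f := f) hn⟩

theorem exists_dominating (hx : IsExhaustion R x) (z : ℕ → M) :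
    ∃ y : ℕ → M, IsExhaustion R y ∧ ∀ n, z n ∈ R ∙ y n := by
  choose k hk using fun n => hx.exists_mem (z n)
  let K : ℕ → ℕ := fun n => n + ∑ i ∈ Finset.range (n + 1), k i
  refine ⟨x ∘ K, hx.comp (fun m n h => ?_) fun n => Nat.le_add_right _ _, fun n => ?_⟩
  · exact add_le_add h (Finset.sum_le_sum_of_subset (Finset.range_mono (by gcongr)))
  · refine hx.mem_of_le (le_add_left ?_) (hk n)
    exact Finset.single_le_sum_of_canonicallyOrdered (Finset.self_mem_range_succ n)

theorem exists_glue (hx : IsExhaustion R x) {φ : ℕ → M →ₗ[R] N}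
    (hφ : ∀ n, φ (n + 1) (x n) = φ n (x n)) :
    ∃ ψ : M →ₗ[R] N, ∀ n, ∀ y ∈ R ∙ x n, ψ y = φ n y := by
  have hφ' : ∀ m n, m ≤ n → ∀ y ∈ R ∙ x m, φ n y = φ m y := fun m n hmn y hy => by
    induction n, hmn using Nat.le_induction with
    | base => rfl
    | succ n hmn ih => exact (eq_of_mem_span_singleton (hφ n) (hx.mem_of_le hmn hy)).trans ih
  choose k hk using hx.exists_mem
  have hk' : ∀ n, ∀ y ∈ R ∙ x n, φ (k y) y = φ n y := fun n y hy =>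
    (le_total (k y) n).elim (fun h => (hφ' _ _ h y (hk y)).symm) fun h => hφ' _ _ h y hy
  refine ⟨⟨⟨fun y => φ (k y) y, fun a b => ?_⟩, fun r a => ?_⟩, hk'⟩
  · have ha := hx.mem_of_le (le_max_left (k a) (k b)) (hk a)
    have hb := hx.mem_of_le (le_max_right (k a) (k b)) (hk b)
    rw [hk' _ _ ha, hk' _ _ hb, hk' _ _ (add_mem ha hb), map_add]
  · simp [hk' _ _ (Submodule.smul_mem _ r (hk a))]

end IsExhaustion

theorem exists_notMem_range {f : M →ₗ[R] N} (hf : ¬ Surjective f) : ∃ z, z ∉ LinearMap.range f := by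
  simpa [Surjective] using hf

theorem IsNonsmall.exists_family [Nontrivial M] (h : IsNonsmall R M) (hM : IsUniserialModule R M) :
    ∃ f : ℕ → M →ₗ[R] M, (∀ n, ¬ Surjective (f n)) ∧ (∀ y, {n | f n y ≠ 0}.Finite) ∧
      ∀ y, ∑ᶠ n, f n y = y := by
  obtain ⟨⟨x, hx⟩, hs⟩ := h
  choose s hs hsx using hs
  let t : ℕ → M →ₗ[R] M := fun n => n.casesOn 0 fun n => s (x n)
  have ht : ∀ n, ¬ Surjective (t n)
    | 0 => fun h0 => (exists_ne (0 : M)).elim fun y hy => hy ((h0 y).elim fun _ h => h.symm)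
    | n + 1 => hs (x n)
  have ht_apply : ∀ {m n y}, y ∈ R ∙ x m → m < n → t n y = y
    | m, n + 1, y, hy, hmn => eq_of_mem_span_singleton (g := LinearMap.id) (hsx (x n))
        (hx.mem_of_le (Nat.le_of_lt_succ hmn) hy)
  have hsupp : ∀ {m y}, y ∈ R ∙ x m → ∀ n, (t (n + 1) - t n) y ≠ 0 → n ∈ Finset.range (m + 1) :=
    fun {m y} hy n hn => by
      by_contra hmn
      have hmn : m < n := by simpa using hmn
      exact hn (by simp [ht_apply hy hmn, ht_apply hy (hmn.trans n.lt_succ_self)])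
  refine ⟨fun n => t (n + 1) - t n, fun n hn => ?_, fun y => ?_, fun y => ?_⟩
  · have hadd : Surjective (t (n + 1)) ∨ Surjective (t n) :=
      hM.surjective_or_surjective fun y => by
        obtain ⟨a, rfl⟩ := hn y
        exact ⟨a, -a, by simp [sub_eq_add_neg]⟩
    exact hadd.elim (ht (n + 1)) (ht n)
  · obtain ⟨m, hm⟩ := hx.exists_mem y
    exact (Finset.range (m + 1)).finite_toSet.subset (hsupp hm)
  · obtain ⟨m, hm⟩ := hx.exists_mem y
    rw [finsum_eq_sum_of_support_subset _ (hsupp hm), ← LinearMap.sum_apply, Finset.sum_range_sub]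
    simp [ht_apply hm m.lt_succ_self, t]

theorem isNonsmall_of_family [Nontrivial M] (hM : IsUniserialModule R M) {K : Type*}
    {f : K → M →ₗ[R] M} (hf : ∀ k, ¬ Surjective (f k)) (hfin : ∀ y, {k | f k y ≠ 0}.Finite)
    (hsum : ∀ y, ∑ᶠ k, f k y = y) : IsNonsmall R M := by
  let F : M → Finset K := fun y => (hfin y).toFinset
  let s : M → M →ₗ[R] M := fun y => ∑ k ∈ F y, f k
  have hs : ∀ y, ¬ Surjective (s y) := fun y hy =>
    (hM.exists_surjective_of_sum hy).elim fun k hk => hf k hk.2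
  have hsy : ∀ y, s y y = y := fun y => by
    conv_rhs => rw [← hsum y, finsum_eq_sum_of_support_subset (s := F y) _ (by simp [F, support])]
    exact LinearMap.sum_apply _ _ _
  choose z hz using fun y => exists_notMem_range (hs y)
  have hyz : ∀ y, y ∈ R ∙ z y := fun y => hM.le_span_singleton_of_notMem (hz y) ⟨y, hsy y⟩
  have hF : ∀ {x y}, y ∈ R ∙ x → F y ⊆ F x := fun {x y} hy k hk => by
    obtain ⟨r, rfl⟩ := Submodule.mem_span_singleton.1 hy
    simp only [F, Set.Finite.mem_toFinset, Set.mem_ofPred_eq, map_smul] at hk ⊢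
    exact fun h0 => hk (by rw [h0, smul_zero])
  have hFz : ∀ y, F y ⊂ F (z y) := fun y => (hF (hyz y)).lt_of_ne fun h =>
    hz y ⟨z y, by simpa only [s, h] using hsy (z y)⟩
  let x : ℕ → M := fun n => z^[n] 0
  have hx_succ : ∀ n, x (n + 1) = z (x n) := fun n => iterate_succ_apply' z n 0
  have hcard : StrictMono fun n => (F (x n)).card :=
    strictMono_nat_of_lt_succ fun n => hx_succ n ▸ Finset.card_lt_card (hFz _)
  refine ⟨⟨x, .of_forall_mem_succ (fun n => hx_succ n ▸ hyz _) fun y => ?_⟩,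
    fun y => ⟨s y, hs y, hsy y⟩⟩
  by_contra! hy
  have hle : (F (x ((F y).card + 1))).card ≤ (F y).card := Finset.card_le_card <| hF <|
    ((hM _ _).resolve_left fun h => hy ((F y).card + 1)
      (h (Submodule.mem_span_singleton_self y))) (Submodule.mem_span_singleton_self _)
  exact absurd ((hcard.le_apply (x := (F y).card + 1)).trans hle) (by simp)

end Nonsmall

section Quasismall

open DirectSum Function

theorem IsNonsmall.not_isQuasismall {R : Type u} [Ring R] {M : Type w} [AddCommGroup M]
    [Module R M] [Nontrivial M] (h : IsNonsmall R M) (hM : IsUniserialModule R M) :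
    ¬ IsQuasismall.{u, w, w} R M := by
  classical
  intro hq
  obtain ⟨f, hf, hfin, hsum⟩ := h.exists_family hM
  choose z hz using fun n => exists_notMem_range (hf n)
  have hle : ∀ n y, f n y ∈ R ∙ z n := fun n y => hM.le_span_singleton_of_notMem (hz n) ⟨y, rfl⟩
  have hdir : IsDirectSummandOf R M (⨁ k : ULift.{w} ℕ, (R ∙ z k.down : Submodule R M)) := by
    refine .directSum_of_finsum (φ := LinearMap.id) bijective_id
      (fun k => (f k.down).codRestrict _ (hle k.down)) (fun y => ?_)
      (fun k => (R ∙ z k.down).subtype) fun y => ?_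
    · convert (hfin y).preimage Equiv.ulift.injective.injOn using 1
      ext k
      simp [Subtype.ext_iff]
    · exact (finsum_comp_equiv Equiv.ulift (f := fun n => f n y)).trans (hsum y)
  obtain ⟨F, i, p, hpi⟩ := hq _ _ _ _ hdir
  have hp : Surjective p := fun y => ⟨i y, LinearMap.congr_fun hpi y⟩
  obtain ⟨k, hk⟩ := exists_surjective_comp_lof hM hp
  obtain ⟨s, hs, hsc⟩ := h.2
    (p.comp (lof R _ _ k) ⟨z k.1.down, Submodule.mem_span_singleton_self _⟩)
  refine hs fun y => ⟨y, ?_⟩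
  obtain ⟨⟨v, hv⟩, rfl⟩ := hk y
  refine eq_of_mem_span_singleton (g := LinearMap.id) hsc ?_
  obtain ⟨r, rfl⟩ := Submodule.mem_span_singleton.1 hv
  exact Submodule.mem_span_singleton.2 ⟨r, (map_smul _ _ _).symm⟩

variable {R : Type*} [Ring R] {M : Type*} [AddCommGroup M] [Module R M] [Nontrivial M]

section Components

variable {K : Type*} [DecidableEq K] {Q : K → Type*} [∀ k, AddCommGroup (Q k)]
  [∀ k, Module R (Q k)] {f : M →ₗ[R] ⨁ k, Q k} {g : (⨁ k, Q k) →ₗ[R] M}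

theorem exists_injective_component (hM : IsUniserialModule R M) (hfg : g.comp f = LinearMap.id) :
    ∃ k, Injective ((g.comp (lof R K Q k)).comp ((component R K Q k).comp f)) := by
  by_contra! hcon
  obtain ⟨x, hx⟩ := exists_ne (0 : M)
  obtain ⟨r, hr, h0⟩ := hM.exists_smul_ne_zero_forall_eq_zero
    (finite_setOf_directSum_apply_ne_zero (f x)).toFinset _ (fun k _ => hcon k) hx
  refine hr ((LinearMap.congr_fun hfg (r • x)).symm.trans ?_)
  rw [LinearMap.comp_apply, apply_eq_finsum_apply_lof]
  refine finsum_eq_zero_of_forall_eq_zero fun k => ?_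
  by_cases hk : f x k = 0
  · simp [DirectSum.smul_apply, hk]
  · exact h0 k (by simpa using hk)

theorem exists_surjective_component (hM : IsUniserialModule R M) (hM' : ¬ IsNonsmall R M)
    (hfg : g.comp f = LinearMap.id) :
    ∃ k, Surjective ((g.comp (lof R K Q k)).comp ((component R K Q k).comp f)) := by
  by_contra! hcon
  refine hM' (isNonsmall_of_family hM hcon (fun y => ?_) fun y => ?_)
  · refine (finite_setOf_directSum_apply_ne_zero (f y)).subset fun k hk h0 => hk ?_
    change g (lof R K Q k (f y k)) = 0
    rw [h0, map_zero, map_zero]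
  · exact (apply_eq_finsum_apply_lof g (f y)).symm.trans (LinearMap.congr_fun hfg y)

end Components

theorem isQuasismall_of_not_isNonsmall (hM : IsUniserialModule R M) (hM' : ¬ IsNonsmall R M) :
    IsQuasismall R M := by
  classical
  intro K Q _ _ ⟨f, g, hfg⟩
  let e : K → M →ₗ[R] M := fun k => (g.comp (lof R K Q k)).comp ((component R K Q k).comp f)
  obtain ⟨s, hs⟩ : ∃ s : Finset K, Bijective (∑ k ∈ s, e k : M →ₗ[R] M) := by
    obtain ⟨k, hk⟩ : ∃ k, Surjective (e k) := exists_surjective_component hM hM' hfg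
    obtain ⟨l, hl⟩ : ∃ l, Injective (e l) := exists_injective_component hM hfg
    by_cases hk' : Injective (e k)
    · exact ⟨{k}, by rw [Finset.sum_singleton]; exact ⟨hk', hk⟩⟩
    by_cases hl' : Surjective (e l)
    · exact ⟨{l}, by rw [Finset.sum_singleton]; exact ⟨hl, hl'⟩⟩
    refine ⟨{l, k}, ?_⟩
    rw [Finset.sum_pair (by rintro rfl; exact hk' hl)]
    exact hM.bijective_add hM hl hl' hk hk'
  refine ⟨s, .directSum_of_finsum hs (fun k => (component R K Q k.1).comp f)
    (fun _ => Set.toFinite _) (fun k => g.comp (lof R K Q k.1)) fun y => ?_⟩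
  rw [finsum_eq_sum_of_fintype, LinearMap.sum_apply]
  exact Finset.sum_coe_sort s fun k => e k y

end Quasismall

theorem isQuasismall_iff_not_isNonsmall {R : Type u} [Ring R] {M : Type w} [AddCommGroup M]
    [Module R M] [Nontrivial M] (hM : IsUniserialModule R M) :
    IsQuasismall.{u, w, w} R M ↔ ¬ IsNonsmall R M :=
  ⟨fun h h' => h'.not_isQuasismall hM h, isQuasismall_of_not_isNonsmall hM⟩

/-! ### Monogeny and epigeny classes of modules that are not quasismall -/

section NonsmallClasses

open Function

variable {R : Type*} [Ring R] {M N : Type*} [AddCommGroup M] [Module R M] [AddCommGroup N]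
  [Module R N]

theorem exists_comp_eq_of_surjective_of_ker_le {P : Type*} [AddCommGroup P] [Module R P]
    {p : M →ₗ[R] N} {f : M →ₗ[R] P} (hp : Surjective p)
    (h : LinearMap.ker p ≤ LinearMap.ker f) : ∃ g : N →ₗ[R] P, g.comp p = f :=
  ⟨((LinearMap.ker p).liftQ f h).comp (p.quotKerEquivOfSurjective hp).symm.toLinearMap,
    LinearMap.ext fun x => by simp [LinearMap.quotKerEquivOfSurjective_symm_apply]⟩

namespace IsNonsmall

theorem of_sameEpigenyClass [Nontrivial N] (hM' : IsNonsmall R M) (hM : IsUniserialModule R M)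
    (hN : IsUniserialModule R N) (h : SameEpigenyClass R M N) : IsNonsmall R N := by
  obtain ⟨⟨x, hx⟩, hs⟩ := hM'
  obtain ⟨⟨p, hp⟩, ⟨q, hq⟩⟩ := h
  refine ⟨⟨p ∘ x, hx.map hp⟩, fun b => ?_⟩
  rcases eq_or_ne b 0 with rfl | hb
  · refine ⟨0, fun h0 => ?_, rfl⟩
    obtain ⟨y, hy⟩ := exists_ne (0 : N)
    exact hy ((h0 y).elim fun _ h => h.symm)
  have hpq : Surjective (p.comp q) := hp.comp hq
  obtain ⟨c, rfl⟩ := hpq b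
  obtain ⟨s, hs, hsc⟩ := hs (q c)
  have hker : LinearMap.ker (p.comp q) ≤ LinearMap.ker (p.comp (s.comp q)) := by
    intro y hy
    obtain ⟨r, rfl⟩ :=
      Submodule.mem_span_singleton.1 (hN.le_span_singleton_of_notMem (x := c) hb hy)
    simpa [hsc] using hy
  obtain ⟨t, ht⟩ := exists_comp_eq_of_surjective_of_ker_le hpq hker
  refine ⟨t, fun ht' => ?_, (LinearMap.congr_fun ht c).trans (congr_arg p hsc)⟩
  have hps : Surjective (p.comp (s.comp q)) := ht ▸ ht'.comp hpq
  have hsq : Surjective (s ∘ q) := hM.surjective_right_of_comp hps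
  exact hs hsq.of_comp

theorem exists_injective_apply_eq (hM' : IsNonsmall R M) (hM : IsUniserialModule R M)
    {f : M →ₗ[R] N} (hf : Injective f) (h : SameMonogenyClass R M N) (x : M) :
    ∃ a : N →ₗ[R] M, Injective a ∧ a (f x) = x := by
  obtain ⟨g, hg⟩ := h.2
  rcases eq_or_ne x 0 with rfl | hx
  · exact ⟨g, hg, by simp⟩
  have of_bijective : ∀ θ : M →ₗ[R] M, Bijective (g.comp f + θ : M →ₗ[R] M) → θ x = 0 →
      ∃ a : N →ₗ[R] M, Injective a ∧ a (f x) = x := by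
    intro θ hθ h0
    let e := LinearEquiv.ofBijective _ hθ
    refine ⟨e.symm.toLinearMap.comp g, e.symm.injective.comp hg, e.symm_apply_eq.2 ?_⟩
    change g (f x) = g (f x) + θ x
    rw [h0, add_zero]
  by_cases hs : Surjective (g.comp f)
  · exact of_bijective 0 (by rw [add_zero]; exact ⟨hg.comp hf, hs⟩) rfl
  obtain ⟨s, hs', hsx⟩ := hM'.2 x
  have hθx : (LinearMap.id - s : M →ₗ[R] M) x = 0 := by simp [hsx]
  refine of_bijective (LinearMap.id - s) (hM.bijective_add hM (hg.comp hf) hs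
    (hM.surjective_id_sub hs') fun hinj => hx (hinj ?_)) hθx
  rw [hθx, map_zero]

theorem exists_mem_range_apply_eq (hM' : IsNonsmall R M) (hN' : IsNonsmall R N)
    (hM : IsUniserialModule R M) (hN : IsUniserialModule R N) (h : SameMonogenyClass R M N)
    (φ : M →ₗ[R] N) (x : M) (y : N) :
    ∃ ψ : M →ₗ[R] N, ψ x = φ x ∧ y ∈ LinearMap.range ψ := by
  by_cases hy : y ∈ LinearMap.range φ
  · exact ⟨φ, rfl, hy⟩
  obtain ⟨f, hf⟩ := h.2
  obtain ⟨a, -, ha⟩ := hN'.exists_injective_apply_eq hN hf h.symm y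
  obtain ⟨s, hs, hsx⟩ := hM'.2 x
  obtain ⟨u, hu⟩ := hM.surjective_id_sub hs (f y)
  let ψ : M →ₗ[R] N := φ + a.comp (LinearMap.id - s)
  have hψu : ψ u = φ u + y := by
    change φ u + a ((LinearMap.id - s : M →ₗ[R] M) u) = _
    rw [hu, ha]
  refine ⟨ψ, by simp [ψ, hsx], ?_⟩
  have hψ : ψ u ∉ LinearMap.range φ := fun hmem => hy <| by
    simpa [hψu] using sub_mem hmem (LinearMap.mem_range_self φ u)
  have hφψ : φ u ∈ LinearMap.range ψ := by
    have hle : (R ∙ ψ u) ≤ LinearMap.range ψ :=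
      (Submodule.span_singleton_le_iff_mem _ _).2 (LinearMap.mem_range_self ψ u)
    exact hle (hN.le_span_singleton_of_notMem hψ (LinearMap.mem_range_self φ u))
  simpa [hψu] using sub_mem (LinearMap.mem_range_self ψ u) hφψ

theorem exists_surjective (hM' : IsNonsmall R M) (hN' : IsNonsmall R N)
    (hM : IsUniserialModule R M) (hN : IsUniserialModule R N) (h : SameMonogenyClass R M N) :
    ∃ φ : M →ₗ[R] N, Surjective φ := by
  obtain ⟨x, hx⟩ := hM'.1
  obtain ⟨y, hy⟩ := hN'.1
  have hext : ∀ (n : ℕ) (φ : M →ₗ[R] N) (k : ℕ), ∃ (ψ : M →ₗ[R] N) (l : ℕ),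
      ψ (x k) = φ (x k) ∧ k < l ∧ y n ∈ R ∙ ψ (x l) := by
    intro n φ k
    obtain ⟨ψ, hψ, u, hu⟩ := hM'.exists_mem_range_apply_eq hN' hM hN h φ (x k) (y n)
    obtain ⟨m, hm⟩ := hx.exists_mem u
    refine ⟨ψ, max (k + 1) m, hψ, by simp, ?_⟩
    rw [← hu, ← Set.image_singleton, ← LinearMap.map_span]
    exact Submodule.mem_map_of_mem (hx.mem_of_le (le_max_right _ _) hm)
  choose F L hF hL hFL using hext
  let st : ℕ → (M →ₗ[R] N) × ℕ := fun n => n.rec (0, 0) fun n p => (F n p.1 p.2, L n p.1 p.2)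
  let φ : ℕ → M →ₗ[R] N := fun n => (st n).1
  let k : ℕ → ℕ := fun n => (st n).2
  have hk : StrictMono k := strictMono_nat_of_lt_succ fun n => hL n (φ n) (k n)
  obtain ⟨ψ, hψ⟩ := (hx.comp hk.monotone fun _ => hk.le_apply).exists_glue (φ := φ)
    fun n => hF n (φ n) (k n)
  refine ⟨ψ, fun v => ?_⟩
  obtain ⟨n, hn⟩ := hy.exists_mem v
  have hyn : y n ∈ R ∙ ψ (x (k (n + 1))) := by
    rw [hψ (n + 1) (x (k (n + 1))) (Submodule.mem_span_singleton_self _)]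
    exact hFL n (φ n) (k n)
  have hle : (R ∙ y n) ≤ LinearMap.range ψ :=
    (Submodule.span_singleton_le_iff_mem _ _).2 <|
      (Submodule.span_singleton_le_iff_mem _ _).2 (LinearMap.mem_range_self ψ _) hyn
  exact hle hn

theorem sameEpigenyClass (hM' : IsNonsmall R M) (hN' : IsNonsmall R N)
    (hM : IsUniserialModule R M) (hN : IsUniserialModule R N) (h : SameMonogenyClass R M N) :
    SameEpigenyClass R M N :=
  ⟨hM'.exists_surjective hN' hM hN h, hN'.exists_surjective hM' hN hM h.symm⟩

end IsNonsmall

end NonsmallClasses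

/-! ### Exchange of uniserial summands -/

section Split

variable {R : Type*} [Ring R] {M N P : Type*} [AddCommGroup M] [Module R M]
  [AddCommGroup N] [Module R N] [AddCommGroup P] [Module R P]

theorem exists_linearEquiv_prod_ker {i : M →ₗ[R] P} {p : P →ₗ[R] N}
    (h : Function.Bijective (p.comp i)) :
    ∃ ψ : P ≃ₗ[R] M × LinearMap.ker p, (∀ x, ψ (i x) = (x, 0)) ∧ ∀ k, ψ.symm (0, k) = k := by
  have hψ : Function.Bijective (i.coprod (LinearMap.ker p).subtype) := by
    refine ⟨(injective_iff_map_eq_zero _).2 fun ⟨x, k⟩ hxk => ?_, fun z => ?_⟩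
    · have hx : x = 0 := h.1 (by simpa using congr_arg p hxk)
      subst hx
      simpa using hxk
    · obtain ⟨x, hx⟩ := h.2 (p z)
      exact ⟨(x, ⟨z - i x, by simpa [sub_eq_zero] using hx.symm⟩), by simp⟩
  refine ⟨(LinearEquiv.ofBijective _ hψ).symm, fun x => ?_, fun k => by simp⟩
  exact (LinearEquiv.symm_apply_eq _).2 (by simp)

theorem nonempty_linearEquiv_of_prod {M' N' : Type*} [AddCommGroup M'] [Module R M']
    [AddCommGroup N'] [Module R N'] (e : (M × M') ≃ₗ[R] N × N')
    (h : Function.Bijective fun x => (e (x, 0)).1) : Nonempty (M' ≃ₗ[R] N') := by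
  let α : M ≃ₗ[R] N := LinearEquiv.ofBijective
    (LinearMap.fst R N N' ∘ₗ e.toLinearMap ∘ₗ LinearMap.inl R M M') h
  let β : M' →ₗ[R] M := -(α.symm.toLinearMap ∘ₗ LinearMap.fst R N N' ∘ₗ e.toLinearMap ∘ₗ
    LinearMap.inr R M M')
  let g : M' →ₗ[R] N' := LinearMap.snd R N N' ∘ₗ e.toLinearMap ∘ₗ β.prod LinearMap.id
  have he : ∀ x x', (e (x, x')).1 = α (x - β x') := fun x x' => by
    have hx : e (x, x') = e (x, 0) + e (0, x') := by simp [← map_add]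
    simp only [hx, β, LinearMap.neg_apply, sub_neg_eq_add, map_add]
    exact congr_arg _ (α.apply_symm_apply _).symm
  refine ⟨.ofBijective g ⟨(injective_iff_map_eq_zero g).2 fun x' hx' => ?_, fun y' => ?_⟩⟩
  · have h0 : e (β x', x') = 0 := Prod.ext (by simp [he]) hx'
    exact (Prod.ext_iff.1 (e.map_eq_zero_iff.1 h0)).2
  · obtain ⟨⟨x, x'⟩, hx⟩ := e.surjective (0, y')
    obtain rfl : x = β x' := by simpa [he, sub_eq_zero] using congr_arg Prod.fst hx
    exact ⟨x', congr_arg Prod.snd hx⟩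

end Split

/-- A nonzero uniserial module. -/
structure UniserialModule (R : Type u) [Ring R] where
  /-- The underlying type. -/
  carrier : Type w
  [addCommGroup : AddCommGroup carrier]
  [module : Module R carrier]
  [nontrivial : Nontrivial carrier]
  isUniserialModule : IsUniserialModule R carrier

namespace UniserialModule

open Function

variable {R : Type u} [Ring R]

instance : CoeSort (UniserialModule.{u, w} R) (Type w) := ⟨carrier⟩

attribute [instance] addCommGroup module nontrivial

theorem exists_exchange (D X Y : UniserialModule.{u, w} R) {a : Y →ₗ[R] D} {c : Y →ₗ[R] X}
    {f : D →ₗ[R] Y} {b : X →ₗ[R] Y} (ha : Injective a) (hc : Surjective c)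
    (hf : Injective f) (hb : Surjective b) (h : Bijective (f.comp a + b.comp c : Y →ₗ[R] Y)) :
    ∃ D' : UniserialModule.{u, w} R, SameMonogenyClass R D' X ∧ SameEpigenyClass R D' D ∧
      ∃ ψ : (D × X) ≃ₗ[R] Y × D', ∀ y, ψ (a y, c y) = (y, 0) := by
  obtain ⟨ψ, hψ, hψ'⟩ := exists_linearEquiv_prod_ker (i := a.prod c) (p := f.coprod b) h
  let fst : LinearMap.ker (f.coprod b) →ₗ[R] D :=
    (LinearMap.fst R D X).comp (LinearMap.ker (f.coprod b)).subtype
  let snd : LinearMap.ker (f.coprod b) →ₗ[R] X :=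
    (LinearMap.snd R D X).comp (LinearMap.ker (f.coprod b)).subtype
  let π : D × X →ₗ[R] LinearMap.ker (f.coprod b) := (LinearMap.snd R _ _).comp ψ.toLinearMap
  have hfst : Surjective fst := fun d => by
    obtain ⟨x, hx⟩ := hb (-f d)
    exact ⟨⟨(d, x), by simp [hx]⟩, rfl⟩
  have hsnd : Injective snd := (injective_iff_map_eq_zero snd).2 fun ⟨⟨d, x⟩, hk⟩ hx => by
    obtain rfl : x = 0 := hx
    obtain rfl : d = 0 := hf (by simpa using hk)
    rfl
  have hinr : Injective (π.comp (LinearMap.inr R D X)) :=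
    (injective_iff_map_eq_zero _).2 fun x hx => by
      have hax : (0, x) = (a (ψ (0, x)).1, c (ψ (0, x)).1) :=
        ψ.injective (Prod.ext (congr_arg Prod.fst (hψ _)).symm
          (hx.trans (congr_arg Prod.snd (hψ _)).symm))
      have h0 : (ψ (0, x)).1 = 0 := ha (by rw [map_zero]; exact (Prod.ext_iff.1 hax).1.symm)
      exact (Prod.ext_iff.1 hax).2.trans (by simp [h0])
  have hinl : Surjective (π.comp (LinearMap.inl R D X)) := fun k => by
    obtain ⟨y, hy⟩ := hc (-k.1.2)
    have hk : ψ (k.1.1 + a y, 0) = (y, k) := by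
      rw [show (k.1.1 + a y, (0 : X)) = a.prod c y + k by ext <;> simp [hy, add_comm], map_add, hψ,
        ← hψ' k, ψ.apply_symm_apply]
      simp
    exact ⟨k.1.1 + a y, congr_arg Prod.snd hk⟩
  have := hfst.nontrivial
  exact ⟨⟨LinearMap.ker (f.coprod b), X.isUniserialModule.of_injective hsnd⟩,
    ⟨⟨snd, hsnd⟩, _, hinr⟩, ⟨⟨fst, hfst⟩, _, hinl⟩, ψ, hψ⟩

variable {X X' Y Y' U V W : UniserialModule.{u, w} R}

theorem nonempty_linearEquiv (h : SameMonogenyClass R U V) (h' : SameEpigenyClass R U V) :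
    Nonempty (U ≃ₗ[R] V) := by
  obtain ⟨f, hf⟩ := h.1
  obtain ⟨g, hg⟩ := h'.1
  exact U.isUniserialModule.nonempty_linearEquiv V.isUniserialModule hf hg

theorem exists_fourth (h : SameMonogenyClass R Y X) (h' : SameEpigenyClass R Y X') :
    ∃ D : UniserialModule.{u, w} R, SameMonogenyClass R D X' ∧ SameEpigenyClass R D X ∧
      Nonempty ((X × X') ≃ₗ[R] Y × D) := by
  obtain ⟨⟨a, ha⟩, ⟨f, hf⟩⟩ := id h
  obtain ⟨⟨c, hc⟩, ⟨b, hb⟩⟩ := id h'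
  by_cases hfa : Surjective (f.comp a)
  · have e : X ≃ₗ[R] Y := LinearEquiv.ofBijective f ⟨hf, Surjective.of_comp (g := a) hfa⟩
    exact ⟨X', .refl, h'.symm.trans (.of_linearEquiv e.symm),
      ⟨e.prodCongr (LinearEquiv.refl R X')⟩⟩
  by_cases hbc : Injective (b.comp c)
  · have e : Y ≃ₗ[R] X' := LinearEquiv.ofBijective c ⟨Injective.of_comp (f := b) hbc, hc⟩
    exact ⟨X, h.symm.trans (.of_linearEquiv e), .refl,
      ⟨(LinearEquiv.prodComm R X X').trans (e.symm.prodCongr (LinearEquiv.refl R X))⟩⟩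
  obtain ⟨D, hD, hD', ψ, -⟩ := exists_exchange X X' Y ha hc hf hb
    (Y.isUniserialModule.bijective_add Y.isUniserialModule (hf.comp ha) hfa (hb.comp hc) hbc)
  exact ⟨D, hD, hD', ⟨ψ⟩⟩

theorem nonempty_prod_linearEquiv (h₁ : SameMonogenyClass R Y X) (h₂ : SameEpigenyClass R Y X')
    (h₃ : SameMonogenyClass R Y' X') (h₄ : SameEpigenyClass R Y' X) :
    Nonempty ((X × X') ≃ₗ[R] Y × Y') := by
  obtain ⟨D, hD, hD', ⟨e⟩⟩ := exists_fourth h₁ h₂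
  obtain ⟨e'⟩ := nonempty_linearEquiv (hD.trans h₃.symm) (hD'.trans h₄.symm)
  exact ⟨e.trans ((LinearEquiv.refl R Y).prodCongr e')⟩

/-- The relation that some nonzero uniserial module shares its monogeny class with `U` and its
epigeny class with `V`. It is the equivalence relation generated by the two classes. -/
def Linked (U V : UniserialModule.{u, w} R) : Prop :=
  ∃ Z : UniserialModule.{u, w} R, SameMonogenyClass R Z U ∧ SameEpigenyClass R Z V

namespace Linked

theorem of_sameMonogenyClass (h : SameMonogenyClass R U V) : U.Linked V := ⟨V, h.symm, .refl⟩

theorem of_sameEpigenyClass (h : SameEpigenyClass R U V) : U.Linked V := ⟨U, .refl, h⟩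

theorem refl (U : UniserialModule.{u, w} R) : U.Linked U := of_sameMonogenyClass .refl

theorem symm (h : U.Linked V) : V.Linked U := by
  obtain ⟨Z, hZ, hZ'⟩ := h
  obtain ⟨D, hD, hD', -⟩ := exists_fourth hZ hZ'
  exact ⟨D, hD, hD'⟩

theorem trans (h : U.Linked V) (h' : V.Linked W) : U.Linked W := by
  obtain ⟨Z, hZ, hZ'⟩ := h
  obtain ⟨T, hT, hT'⟩ := h'
  obtain ⟨D, hD, hD', -⟩ := exists_fourth hT.symm hZ'.symm
  exact ⟨D, hD.trans hZ, hD'.trans hT'⟩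

theorem sameEpigenyClass (h : U.Linked V) (hU : IsNonsmall R U) (hV : IsNonsmall R V) :
    SameEpigenyClass R U V := by
  obtain ⟨Z, hZ, hZ'⟩ := h
  have hZV := hV.of_sameEpigenyClass V.isUniserialModule Z.isUniserialModule hZ'.symm
  exact (hU.sameEpigenyClass hZV U.isUniserialModule Z.isUniserialModule hZ.symm).trans hZ'

end Linked

/-- The vanishing of `ψ` at `d` makes the telescoping along an infinite chain terminate at every
element. -/
theorem exists_exchange_of_isNonsmall {D : UniserialModule.{u, w} R} (hD : IsNonsmall R D)
    (h : SameMonogenyClass R Y D) (h' : SameEpigenyClass R Y X) (d : D) :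
    ∃ D' : UniserialModule.{u, w} R, IsNonsmall R D' ∧ SameMonogenyClass R D' X ∧
      ∃ ψ : (D × X) ≃ₗ[R] Y × D', (ψ (d, 0)).2 = 0 := by
  wlog hd : d ≠ 0
  · obtain ⟨d', hd'⟩ := exists_ne (0 : D)
    obtain ⟨D', h₁, h₂, ψ, -⟩ := this hD h h' d' hd'
    obtain rfl := not_not.1 hd
    exact ⟨D', h₁, h₂, ψ, by rw [Prod.mk_zero_zero, map_zero]; rfl⟩
  obtain ⟨f, hf⟩ := h.2
  obtain ⟨a, ha, hafd⟩ := hD.exists_injective_apply_eq D.isUniserialModule hf h.symm d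
  obtain ⟨s, hs, hsd⟩ := hD.2 d
  obtain ⟨⟨c₀, hc₀⟩, ⟨b, hb⟩⟩ := h'
  have hsi := D.isUniserialModule.injective_of_apply_eq_self hd hsd
  let t : Y →ₗ[R] Y := (f.comp s).comp a
  have ht : ¬ Surjective t := fun ht => hs fun x => by
    obtain ⟨y, hy⟩ := ht (f x)
    exact ⟨a y, hf hy⟩
  have hti : Injective t := (hf.comp hsi).comp ha
  let c : Y →ₗ[R] X := c₀.comp (LinearMap.id - t)
  have hc : Surjective c := hc₀.comp (Y.isUniserialModule.surjective_id_sub ht)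
  have hcfd : c (f d) = 0 := by simp [c, t, hafd, hsd]
  have hbc : ¬ Injective (b.comp c) := fun hi => hd (hf (hi (by simp [hcfd])))
  obtain ⟨D', hD'X, hD'D, ψ, hψ⟩ := exists_exchange D X Y ha hc (f := f.comp s) (hf.comp hsi) hb
    (Y.isUniserialModule.bijective_add Y.isUniserialModule hti ht (hb.comp hc) hbc)
  have hD' := hD.of_sameEpigenyClass D.isUniserialModule D'.isUniserialModule hD'D.symm
  refine ⟨D', hD', hD'X, ψ, ?_⟩
  simpa [hafd, hcfd] using congr_arg Prod.snd (hψ (f d))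

end UniserialModule

/-! ### Telescoping -/

section Telescope

open DirectSum Filter Function

variable {R : Type*} [Ring R]

/-- Splitting off one summand of a direct sum, the indices of the others being enumerated by `L`. -/
noncomputable def directSumSplitEquiv {K L : Type*} (Q : K → Type*) [∀ k, AddCommGroup (Q k)]
    [∀ k, Module R (Q k)] (e : Option L ≃ K) :
    (⨁ k, Q k) ≃ₗ[R] Q (e none) × ⨁ l, Q (e (some l)) :=
  (lequivCongrLeft R e.symm).trans (lequivProdDirectSum R (α := fun l => Q (e l)))

variable {D X Y : ℕ → Type*} [∀ n, AddCommGroup (D n)] [∀ n, Module R (D n)]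
  [∀ n, AddCommGroup (X n)] [∀ n, Module R (X n)] [∀ n, AddCommGroup (Y n)] [∀ n, Module R (Y n)]
  (ψ : ∀ n, (D n × X n) ≃ₗ[R] Y n × D (n + 1))

/-- The module carried along when the isomorphisms `ψ n` are applied successively: the part in `D n`
is paired with the component in `X n`, and `ψ n` splits off a component in `Y n`. -/
noncomputable def telescope : ∀ n, (D 0 × ⨁ n, X n) →ₗ[R] D n
  | 0 => LinearMap.fst R _ _
  | n + 1 => LinearMap.snd R _ _ ∘ₗ (ψ n).toLinearMap ∘ₗ
      (telescope n).prod (component R ℕ X n ∘ₗ LinearMap.snd R _ _)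

theorem telescope_succ_apply (n : ℕ) (m : D 0 × ⨁ n, X n) :
    telescope ψ (n + 1) m = (ψ n (telescope ψ n m, m.2 n)).2 := rfl

theorem telescope_congr {n : ℕ} {m m' : D 0 × ⨁ n, X n} (h : m.1 = m'.1)
    (h' : ∀ k < n, m.2 k = m'.2 k) : telescope ψ n m = telescope ψ n m' := by
  induction n with
  | zero => exact h
  | succ n ih =>
    rw [telescope_succ_apply, telescope_succ_apply, ih fun k hk => h' k (hk.trans n.lt_succ_self),
      h' n n.lt_succ_self]

theorem exists_telescope_eq (y : ∀ n, Y n) (n : ℕ) (d : D n) :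
    ∃ m, telescope ψ n m = d ∧ (∀ k ≥ n, m.2 k = 0) ∧
      ∀ k < n, (ψ k (telescope ψ k m, m.2 k)).1 = y k := by
  induction n with
  | zero => exact ⟨(d, 0), rfl, fun _ _ => rfl, fun k hk => absurd hk k.not_lt_zero⟩
  | succ n ih =>
    obtain ⟨m, hm, hm0, hmy⟩ := ih ((ψ n).symm (y n, d)).1
    let m' : D 0 × ⨁ n, X n := (m.1, m.2 + lof R ℕ X n ((ψ n).symm (y n, d)).2)
    have hne : ∀ k ≠ n, m'.2 k = m.2 k := fun k hk => by
      simp [m', DirectSum.add_apply, lof_eq_of, DirectSum.of_eq_of_ne _ _ _ hk]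
    have hm' : ∀ k ≤ n, telescope ψ k m' = telescope ψ k m := fun k hk =>
      telescope_congr ψ rfl fun l hl => hne l (hl.trans_le hk).ne
    have hψ : ψ n (telescope ψ n m', m'.2 n) = (y n, d) := by
      have hn : m'.2 n = ((ψ n).symm (y n, d)).2 := by
        simp [m', DirectSum.add_apply, hm0 n le_rfl, lof_eq_of]
      rw [hm' n le_rfl, hm, hn, Prod.mk.eta, LinearEquiv.apply_symm_apply]
    refine ⟨m', congr_arg Prod.snd hψ, fun k hk => ?_, fun k hk => ?_⟩
    · rw [hne k (Nat.lt_of_succ_le hk).ne', hm0 k (Nat.le_of_succ_le hk)]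
    · obtain hk | rfl := Nat.lt_succ_iff_lt_or_eq.1 hk
      · rw [hm' k hk.le, hne k hk.ne, hmy k hk]
      · exact congr_arg Prod.fst hψ

theorem eventually_directSum_apply_eq_zero (x : ⨁ n, X n) : ∀ᶠ n in atTop, x n = 0 := by
  rw [← Nat.cofinite_eq_atTop]
  exact finite_setOf_directSum_apply_ne_zero x

theorem nonempty_linearEquiv_of_telescope
    (h : ∀ d : ∀ n, D n, (∀ᶠ n in atTop, d (n + 1) = (ψ n (d n, 0)).2) → ∀ᶠ n in atTop, d n = 0) :
    Nonempty ((D 0 × ⨁ n, X n) ≃ₗ[R] ⨁ n, Y n) := by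
  have hs : ∀ m, ∀ᶠ n in atTop, telescope ψ n m = 0 := fun m =>
    h (fun n => telescope ψ n m) <| (eventually_directSum_apply_eq_zero m.2).mono fun n hn => by
      rw [telescope_succ_apply, hn]
  let π : ∀ n, (D 0 × ⨁ n, X n) →ₗ[R] Y n := fun n => LinearMap.fst R _ _ ∘ₗ (ψ n).toLinearMap ∘ₗ
    (telescope ψ n).prod (component R ℕ X n ∘ₗ LinearMap.snd R _ _)
  have hπ : ∀ n m, ψ n (telescope ψ n m, m.2 n) = (π n m, telescope ψ (n + 1) m) := fun _ _ => rfl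
  have hπ_fin : ∀ m, {n | π n m ≠ 0}.Finite := fun m => by
    have : ∀ᶠ n in atTop, π n m = 0 := by
      filter_upwards [hs m, eventually_directSum_apply_eq_zero m.2] with n hn hn'
      have := hπ n m
      rw [hn, hn', Prod.mk_zero_zero, map_zero] at this
      exact (congr_arg Prod.fst this).symm
    rwa [← Nat.cofinite_eq_atTop] at this
  refine ⟨.ofBijective (directSumLift π hπ_fin) ⟨?_, fun y => ?_⟩⟩
  · refine (injective_iff_map_eq_zero _).2 fun m hm => ?_
    have hm0 : ∀ n, telescope ψ (n + 1) m = 0 → telescope ψ n m = 0 ∧ m.2 n = 0 := fun n hn =>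
      Prod.ext_iff.1 <| (ψ n).map_eq_zero_iff.1 <| by
        rw [hπ, hn, ← directSumLift_apply π hπ_fin, hm]
        rfl
    have hm1 : ∀ n, telescope ψ n m = 0 := fun n => by
      obtain ⟨N, hN⟩ := eventually_atTop.1 (hs m)
      exact Nat.decreasingInduction (motive := fun n _ => telescope ψ n m = 0)
        (fun k _ hk => (hm0 k hk).1) (hN _ (le_max_left N n)) (le_max_right N n)
    exact Prod.ext (hm1 0) (DFinsupp.ext fun n => (hm0 n (hm1 _)).2)
  · obtain ⟨N, hN⟩ := eventually_atTop.1 (eventually_directSum_apply_eq_zero y)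
    obtain ⟨m, hm, hm0, hmy⟩ := exists_telescope_eq ψ y N 0
    have hm1 : ∀ n ≥ N, telescope ψ n m = 0 := fun n hn => by
      induction n, hn using Nat.le_induction with
      | base => exact hm
      | succ n hn ih => rw [telescope_succ_apply, ih, hm0 n hn, Prod.mk_zero_zero, map_zero]; rfl
    refine ⟨m, DFinsupp.ext fun n => ?_⟩
    rw [directSumLift_apply]
    obtain hn | hn := lt_or_ge n N
    · exact hmy n hn
    · refine (congr_arg Prod.fst (hπ n m)).symm.trans ?_
      rw [hm1 n hn, hm0 n hn, hN n hn, Prod.mk_zero_zero, map_zero]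
      rfl

end Telescope

namespace UniserialModule

open DirectSum Filter

variable {R : Type u} [Ring R]

/-- A module that is not quasismall in the monogeny class of `Y`, with an exhaustion. These are the
modules carried along in `nonempty_directSum_linearEquiv_of_shift`. -/
structure Carrier (Y : UniserialModule.{u, w} R) where
  /-- The module. -/
  toUniserialModule : UniserialModule.{u, w} R
  /-- The exhaustion. -/
  gen : ℕ → toUniserialModule
  isNonsmall : IsNonsmall R toUniserialModule
  isExhaustion : IsExhaustion R gen
  sameMonogenyClass : SameMonogenyClass R Y toUniserialModule

theorem Carrier.exists_next {X Y Y' : UniserialModule.{u, w} R} (D : Carrier Y)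
    (h : SameEpigenyClass R Y X) (h' : SameMonogenyClass R Y' X) (n : ℕ) :
    ∃ (D' : Carrier Y') (ψ : (D.toUniserialModule × X) ≃ₗ[R] Y × D'.toUniserialModule),
      (ψ (D.gen n, 0)).2 = 0 ∧ ∀ k, (ψ (D.gen k, 0)).2 ∈ R ∙ D'.gen k := by
  obtain ⟨D', hD', hD'X, ψ, hψ⟩ :=
    exists_exchange_of_isNonsmall D.isNonsmall D.sameMonogenyClass h (D.gen n)
  obtain ⟨g, hg, hψg⟩ := hD'.1.choose_spec.exists_dominating fun k => (ψ (D.gen k, 0)).2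
  exact ⟨⟨D', g, hD', hg, h'.trans hD'X.symm⟩, ψ, hψ, hψg⟩

theorem nonempty_directSum_linearEquiv_of_shift {X Y : ℕ → UniserialModule.{u, w} R}
    (hX : IsNonsmall R (X 0)) (h : ∀ n, SameMonogenyClass R (Y n) (X n))
    (h' : ∀ n, SameEpigenyClass R (Y n) (X (n + 1))) :
    Nonempty ((⨁ n, X n) ≃ₗ[R] ⨁ n, Y n) := by
  choose next ψ hψ hψg using fun n (D : Carrier (Y n)) => D.exists_next (h' n) (h (n + 1)) n
  let D : ∀ n, Carrier (Y n) := fun n =>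
    n.rec ⟨X 0, hX.1.choose, hX, hX.1.choose_spec, h 0⟩ next
  let δ : ∀ n, (D n).toUniserialModule →ₗ[R] (D (n + 1)).toUniserialModule := fun n =>
    LinearMap.snd R _ _ ∘ₗ (ψ n (D n)).toLinearMap ∘ₗ LinearMap.inl R _ _
  have hδ : ∀ n d k, d ∈ R ∙ (D n).gen k → δ n d ∈ R ∙ (D (n + 1)).gen k := fun n d k hd => by
    obtain ⟨r, rfl⟩ := Submodule.mem_span_singleton.1 hd
    rw [map_smul]
    exact Submodule.smul_mem _ r (hψg n (D n) k)
  let e : Option ℕ ≃ ℕ := (Equiv.optionEquivSumPUnit.{0} ℕ).trans Equiv.natSumPUnitEquivNat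
  refine (nonempty_linearEquiv_of_telescope (D := fun n => (D n).toUniserialModule)
    (X := fun n => X (n + 1)) (Y := fun n => Y n) (fun n => ψ n (D n)) fun d hd => ?_).map
    fun E => (directSumSplitEquiv (fun n => X n) e).trans E
  obtain ⟨N, hN⟩ := eventually_atTop.1 hd
  obtain ⟨k, hk⟩ := (D N).isExhaustion.exists_mem (d N)
  have hdk : ∀ n ≥ N, d n ∈ R ∙ (D n).gen k := fun n hn => by
    induction n, hn using Nat.le_induction with
    | base => exact hk
    | succ n hn ih => exact hN n hn ▸ hδ n _ _ ih
  rw [← map_add_atTop_eq_nat 1, eventually_map]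
  filter_upwards [eventually_ge_atTop N, eventually_ge_atTop k] with n hn hkn
  exact (hN n hn).trans
    (eq_of_mem_span_singleton (f := δ n) (g := 0) (hψ n (D n))
      ((D n).isExhaustion.mem_of_le hkn (hdk n hn)))

end UniserialModule

/-! ### Sufficiency -/

theorem exists_involutive_involutive_comp {α : Type*} (π : Equiv.Perm α) :
    ∃ ρ : α → α, Function.Involutive ρ ∧ Function.Involutive (ρ ∘ π) := by
  let S := Equiv.Perm.SameCycle.setoid π
  choose c hc using fun x : α => Quotient.exact (Quotient.mk S x).out_eq
  let r : α → α := fun x => (Quotient.mk S x).out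
  have hr : ∀ {x y} (k : ℤ), (π ^ k) (r x) = y → r y = r x := fun {x y} k hk =>
    congr_arg Quotient.out (Quotient.sound (s := S) (a := x) (b := y)
      (.trans (.symm ⟨c x, hc x⟩) ⟨k, hk⟩)).symm
  -- `ρ` is the reflection of each cycle at its representative
  let ρ : α → α := fun x => (π ^ (-c x)) (r x)
  have hρ : ∀ {x y} (k : ℤ), (π ^ k) (r x) = y → ρ y = (π ^ (-k)) (r x) := fun {x y} k hk => by
    have hy : (π ^ c y) (r x) = (π ^ k) (r x) := by rw [hk, ← hr k hk, hc]
    simp only [ρ, hr k hk]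
    rw [show -c y = -c y - k + k by ring, zpow_add, Equiv.Perm.mul_apply, ← hy,
      ← Equiv.Perm.mul_apply, ← zpow_add]
    congr 2
    ring
  have hρρ : Function.Involutive ρ := fun x => by
    rw [hρ (x := x) (y := ρ x) _ rfl, neg_neg, hc]
  have hπρ : ∀ x, π (ρ (π x)) = ρ x := fun x => by
    rw [hρ (x := x) (c x + 1) (by rw [add_comm, zpow_one_add, Equiv.Perm.mul_apply, hc]),
      ← Equiv.Perm.mul_apply, ← zpow_one_add]
    congr 2
    ring
  exact ⟨ρ, hρρ, fun x => by rw [Function.comp_apply, Function.comp_apply, hπρ, hρρ]⟩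

theorem eq_or_aleph0_le_of_add_eq_add {a b p : Cardinal.{w}} (h : a + p = b + p) :
    a = b ∨ Cardinal.aleph0 ≤ p ∧ a ≤ p ∧ b ≤ p := by
  rcases lt_or_ge p Cardinal.aleph0 with hp | hp
  · exact .inl (Cardinal.eq_of_add_eq_add_right h hp)
  rw [Cardinal.add_eq_max' hp, Cardinal.add_eq_max' hp] at h
  rcases le_or_gt a p with ha | ha
  · rw [max_eq_right ha] at h
    exact .inr ⟨hp, ha, h ▸ le_max_left b p⟩
  · rw [max_eq_left ha.le] at h
    exact .inl (h.trans (max_eq_left (le_of_not_gt fun hb =>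
      ha.ne' (h.trans (max_eq_right hb.le)))))

namespace UniserialModule

open DirectSum Function

variable {R : Type u} [Ring R]

/-- The direct sums of two families are isomorphic. -/
def SumIso {I J : Type*} (U : I → UniserialModule.{u, w} R) (V : J → UniserialModule.{u, w} R) :
    Prop :=
  Nonempty ((⨁ i, U i) ≃ₗ[R] ⨁ j, V j)

namespace SumIso

section

variable {I J K : Type*} {U : I → UniserialModule.{u, w} R} {V : J → UniserialModule.{u, w} R}
  {W : K → UniserialModule.{u, w} R}

theorem symm (h : SumIso U V) : SumIso V U := h.map LinearEquiv.symm

theorem trans (h : SumIso U V) (h' : SumIso V W) : SumIso U W :=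
  h.elim fun e => h'.map fun e' => e.trans e'

theorem reindex (V : J → UniserialModule.{u, w} R) (e : I ≃ J) : SumIso (fun i => V (e i)) V :=
  ⟨(lequivCongrLeft R (M := fun j => V j) e.symm).symm⟩

theorem congr_of_equiv {T : Type*} {U V : I → UniserialModule.{u, w} R} (e : T ≃ I)
    (h : SumIso (fun t => U (e t)) fun t => V (e t)) : SumIso U V :=
  (reindex U e).symm.trans (h.trans (reindex V e))

theorem of_forall {U V : I → UniserialModule.{u, w} R} (h : ∀ i, Nonempty (U i ≃ₗ[R] V i)) :
    SumIso U V :=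
  ⟨congrLinearEquiv fun i => (h i).some⟩

theorem sigma {T : Type*} {A B : T → Type*} {U : (Σ t, A t) → UniserialModule.{u, w} R}
    {V : (Σ t, B t) → UniserialModule.{u, w} R}
    (h : ∀ t, SumIso (fun a => U ⟨t, a⟩) fun b => V ⟨t, b⟩) : SumIso U V := by
  classical
  exact ⟨(sigmaLcurryEquiv R (δ := fun t a => U ⟨t, a⟩)).trans
    ((congrLinearEquiv fun t => (h t).some).trans
      (sigmaLcurryEquiv R (δ := fun t b => V ⟨t, b⟩)).symm)⟩

theorem of_fibers {T : Type*} (p : I → T) (q : J → T)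
    (h : ∀ t, SumIso (fun i : {i // p i = t} => U i) fun j : {j // q j = t} => V j) :
    SumIso U V :=
  (reindex U (Equiv.sigmaFiberEquiv p)).symm.trans
    ((sigma (U := fun x => U (Equiv.sigmaFiberEquiv p x))
      (V := fun x => V (Equiv.sigmaFiberEquiv q x)) h).trans
      (reindex V (Equiv.sigmaFiberEquiv q)))

theorem of_pair {U V : I → UniserialModule.{u, w} R} {i j : I} (hij : i ≠ j)
    (hI : ∀ k, k = i ∨ k = j) (h : Nonempty ((U i × U j) ≃ₗ[R] V i × V j)) : SumIso U V := by
  classical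
  have hprod : ∀ W : I → UniserialModule.{u, w} R,
      Bijective ((component R I (fun i => W i) i).prod (component R I (fun i => W i) j)) :=
    fun W => by
      refine ⟨(injective_iff_map_eq_zero _).2 fun x hx => DFinsupp.ext fun k => ?_, fun x =>
        ⟨lof R I (fun i => W i) i x.1 + lof R I (fun i => W i) j x.2, ?_⟩⟩
      · obtain rfl | rfl := hI k
        exacts [congr_arg Prod.fst hx, congr_arg Prod.snd hx]
      · ext <;> simp [component.lof_self, component.of, hij, hij.symm]
  exact h.map fun e => (LinearEquiv.ofBijective _ (hprod U)).trans
    (e.trans (LinearEquiv.ofBijective _ (hprod V)).symm)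

end

variable {I : Type w} {A B : I → UniserialModule.{u, w} R}

theorem of_involutive {ρ : I → I} (hρ : Involutive ρ) (h : ∀ i, SameMonogenyClass R (A i) (B i))
    (h' : ∀ i, SameEpigenyClass R (B i) (A (ρ i))) : SumIso A B := by
  refine of_fibers (fun i => s(i, ρ i)) (fun i => s(i, ρ i)) fun t => ?_
  induction t using Sym2.inductionOn with | _ i j
  by_cases hfix : ∃ k : {k // s(k, ρ k) = s(i, j)}, ρ k ≠ k
  · obtain ⟨⟨k, hk⟩, hρk⟩ := hfix
    have hk' : s(ρ k, ρ (ρ k)) = s(i, j) := by rw [hρ, Sym2.eq_swap, hk]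
    have hρk' := h' (ρ k)
    rw [hρ] at hρk'
    exact of_pair (i := ⟨k, hk⟩) (j := ⟨ρ k, hk'⟩)
      (fun heq => hρk (congr_arg Subtype.val heq).symm)
      (fun l => (Sym2.eq_iff.1 (l.2.trans hk.symm)).imp
        (fun hl => Subtype.ext hl.1) fun hl => Subtype.ext hl.1)
      (nonempty_prod_linearEquiv (h k).symm (h' k) (h (ρ k)).symm hρk')
  · push Not at hfix
    refine of_forall fun k => ?_
    have hk := h' k
    rw [hfix k] at hk
    exact nonempty_linearEquiv (h k) hk.symm

theorem of_perm (π : Equiv.Perm I) (hA : ∀ i j, (A i).Linked (A j))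
    (h : ∀ i, SameMonogenyClass R (A i) (B i)) (h' : ∀ i, SameEpigenyClass R (B i) (A (π i))) :
    SumIso A B := by
  obtain ⟨ρ, hρ, hρπ⟩ := exists_involutive_involutive_comp π
  choose Z hZ hZ' using fun i => hA i (ρ i)
  refine (of_involutive hρ (fun i => (hZ i).symm) hZ').trans
    (of_involutive hρπ (fun i => (hZ i).trans (h i)) fun i => (h' i).trans ?_)
  have hρπ' := (hZ' (ρ (π i))).symm
  rwa [hρ] at hρπ'

end SumIso

end UniserialModule

namespace UniserialModule

open DirectSum Function Cardinal

variable {R : Type u} [Ring R] {I J : Type w}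

/-- A link goes from `t x` to `ρ x`, and the links indexed by `N × ℕ` form for each `n : N` the
infinite chain `n`, `ρ (n, 0)`, `ρ (n, 1)`, …. -/
theorem exists_chains {N P : Type w} (h₁ : ℵ₀ ≤ #P) (h₂ : #N ≤ #P) :
    ∃ (ρ : N × ℕ ⊕ P ≃ P) (t : N × ℕ ⊕ P ≃ N ⊕ P), (∀ n, t (.inl (n, 0)) = .inl n) ∧
      (∀ n k, t (.inl (n, k + 1)) = .inr (ρ (.inl (n, k)))) ∧
      ∀ p, t (.inr p) = .inr (ρ (.inr p)) := by
  have hcard : #(N × ℕ ⊕ P) = #P := by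
    simp only [mk_sum, mk_prod, lift_id, lift_uzero, mk_nat, lift_aleph0]
    exact add_eq_right h₁ ((mul_le_mul' h₂ h₁).trans (mul_eq_self h₁).le)
  obtain ⟨ρ⟩ := Cardinal.eq.1 hcard
  let shift : N × ℕ ≃ N ⊕ N × ℕ :=
    ((Equiv.prodCongr (.refl N) Equiv.natSumPUnitEquivNat.{0}.symm).trans
      (Equiv.prodSumDistrib N ℕ PUnit)).trans
      ((Equiv.sumCongr (.refl _) (Equiv.prodPUnit N)).trans (Equiv.sumComm _ _))
  exact ⟨ρ, (Equiv.sumCongr shift (.refl P)).trans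
    ((Equiv.sumAssoc N (N × ℕ) P).trans (Equiv.sumCongr (.refl N) ρ)),
    fun _ => rfl, fun _ _ => rfl, fun _ => rfl⟩

theorem exists_absorb {U : I → UniserialModule.{u, w} R} (hU : ∀ i j, (U i).Linked (U j))
    (h₁ : ℵ₀ ≤ #{i // ¬ IsNonsmall R (U i)})
    (h₂ : #{i // IsNonsmall R (U i)} ≤ #{i // ¬ IsNonsmall R (U i)}) :
    ∃ (W : I → UniserialModule.{u, w} R) (ρ : I ≃ {i // ¬ IsNonsmall R (U i)}),
      (∀ i, SameMonogenyClass R (W i) (U i)) ∧ (∀ i, SameEpigenyClass R (W i) (U (ρ i))) ∧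
      SumIso U W := by
  classical
  obtain ⟨ρ, t₀, ht_zero, ht_succ, ht_inr⟩ := exists_chains h₁ h₂
  let t := t₀.trans (Equiv.sumCompl fun i => IsNonsmall R (U i))
  choose W hW hW' using fun i => hU i (ρ (t.symm i))
  have hWt : ∀ x, SameEpigenyClass R (W (t x)) (U (ρ x)) := fun x => by
    have := hW' (t x)
    rwa [Equiv.symm_apply_apply] at this
  refine ⟨W, t.symm.trans ρ, hW, hW', .congr_of_equiv t ?_⟩
  let p : {i // IsNonsmall R (U i)} × ℕ ⊕ {i // ¬ IsNonsmall R (U i)} →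
    Option {i // IsNonsmall R (U i)} := Sum.elim (fun x => some x.1) fun _ => none
  refine .of_fibers p p fun o => ?_
  rcases o with - | n
  · refine .of_forall ?_
    rintro ⟨x | q, hx⟩
    · simp [p] at hx
    · refine nonempty_linearEquiv (hW _).symm ?_
      have ht : t (.inr q) = ρ (.inr q) := by simp [t, ht_inr]
      have := hWt (.inr q)
      rw [← ht] at this
      exact this.symm
  · let e : ℕ ≃ {x // p x = some n} := .ofBijective (fun k => ⟨.inl (n, k), rfl⟩)
      ⟨fun k l hkl => congr_arg Prod.snd (Sum.inl_injective (congr_arg Subtype.val hkl)), by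
        rintro ⟨⟨m, k⟩ | q, hx⟩
        · obtain rfl : m = n := Option.some.inj hx
          exact ⟨k, rfl⟩
        · simp [p] at hx⟩
    refine .congr_of_equiv e
      (nonempty_directSum_linearEquiv_of_shift ?_ (fun k => hW _) fun k => ?_)
    · have ht : t (.inl (n, 0)) = n := by simp [t, ht_zero]
      change IsNonsmall R (U (t (.inl (n, 0))))
      rw [ht]
      exact n.2
    · have ht : t (.inl (n, k + 1)) = ρ (.inl (n, k)) := by simp [t, ht_succ]
      change SameEpigenyClass R (W (t (.inl (n, k)))) (U (t (.inl (n, k + 1))))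
      rw [ht]
      exact hWt _

theorem Linked.sumIso_of_equiv {U V : I → UniserialModule.{u, w} R}
    (hU : ∀ i j, (U i).Linked (U j)) (h : ∀ i, SameMonogenyClass R (U i) (V i))
    (ν : {i // IsNonsmall R (U i)} ≃ {i // IsNonsmall R (V i)})
    (τ : {i // ¬ IsNonsmall R (U i)} ≃ {i // ¬ IsNonsmall R (V i)})
    (hτ : ∀ i, SameEpigenyClass R (U i.1) (V (τ i).1)) : SumIso U V := by
  classical
  let π := Equiv.subtypeCongr ν τ
  have hπ : ∀ i, SameEpigenyClass R (U i) (V (π i)) := fun i => by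
    by_cases hi : IsNonsmall R (U i)
    · have hπi : π i = ν ⟨i, hi⟩ := by simp [π, Equiv.subtypeCongr, hi]
      exact ((hU i (π i)).trans (.of_sameMonogenyClass (h _))).sameEpigenyClass hi
        (hπi ▸ (ν ⟨i, hi⟩).2)
    · have hπi : π i = τ ⟨i, hi⟩ := by simp [π, Equiv.subtypeCongr, hi]
      rw [hπi]
      exact hτ ⟨i, hi⟩
  refine .of_perm π.symm hU h fun i => ?_
  have := (hπ (π.symm i)).symm
  rwa [Equiv.apply_symm_apply] at this

theorem Linked.sumIso {U V : I → UniserialModule.{u, w} R}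
    (hU : ∀ i j, (U i).Linked (U j)) (h : ∀ i, SameMonogenyClass R (U i) (V i))
    (τ : {i // ¬ IsNonsmall R (U i)} ≃ {i // ¬ IsNonsmall R (V i)})
    (hτ : ∀ i, SameEpigenyClass R (U i.1) (V (τ i).1)) : SumIso U V := by
  classical
  have hV : ∀ i j, (V i).Linked (V j) := fun i j => (of_sameMonogenyClass (h i).symm).trans
    ((hU i j).trans (of_sameMonogenyClass (h j)))
  have hcard : #{i // IsNonsmall R (U i)} + #{i // ¬ IsNonsmall R (U i)} =
      #{i // IsNonsmall R (V i)} + #{i // ¬ IsNonsmall R (U i)} := by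
    rw [mk_congr τ]
    conv_lhs => rw [← mk_congr τ]
    exact (mk_sum_compl _).trans (mk_sum_compl _).symm
  obtain hN | ⟨h₁, h₂, h₃⟩ := eq_or_aleph0_le_of_add_eq_add hcard
  · obtain ⟨ν⟩ := Cardinal.eq.1 hN
    exact sumIso_of_equiv hU h ν τ hτ
  obtain ⟨W, ρ, hW, hWρ, hUW⟩ := exists_absorb hU h₁ h₂
  rw [mk_congr τ] at h₁ h₃
  obtain ⟨W', ρ', hW', hWρ', hVW'⟩ := exists_absorb hV h₁ h₃
  refine hUW.trans (.trans ?_ hVW'.symm)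
  refine .of_perm (ρ'.trans (τ.symm.trans ρ.symm))
    (fun i j => (of_sameMonogenyClass (hW i)).trans
      ((hU i j).trans (of_sameMonogenyClass (hW j).symm)))
    (fun i => (hW i).trans ((h i).trans (hW' i).symm)) fun i => (hWρ' i).trans ?_
  have hτi := hτ (τ.symm (ρ' i))
  have hρi := hWρ (ρ.symm (τ.symm (ρ' i)))
  rw [Equiv.apply_symm_apply] at hτi hρi
  exact hτi.symm.trans hρi.symm

theorem sumIso_of_forall_sameMonogenyClass {U V : I → UniserialModule.{u, w} R}
    (h : ∀ i, SameMonogenyClass R (U i) (V i))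
    (τ : {i // ¬ IsNonsmall R (U i)} ≃ {i // ¬ IsNonsmall R (V i)})
    (hτ : ∀ i, SameEpigenyClass R (U i.1) (V (τ i).1)) : SumIso U V := by
  let S : Setoid (UniserialModule.{u, w} R) := ⟨Linked, Linked.refl, Linked.symm, Linked.trans⟩
  let p : I → Quotient S := fun i => Quotient.mk S (U i)
  let q : I → Quotient S := fun i => Quotient.mk S (V i)
  have hpq : ∀ i, p i = q i := fun i => Quotient.sound (s := S) (.of_sameMonogenyClass (h i))
  have hτp : ∀ i, p (τ i) = p i := fun i =>
    (hpq _).trans (Quotient.sound (s := S) (.of_sameEpigenyClass (hτ i))).symm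
  refine .of_fibers p p fun t => ?_
  let τt : {i : {i // p i = t} // ¬ IsNonsmall R (U i)} ≃
      {i : {i // p i = t} // ¬ IsNonsmall R (V i)} :=
    { toFun := fun i => ⟨⟨τ ⟨i.1, i.2⟩, (hτp _).trans i.1.2⟩, (τ _).2⟩
      invFun := fun i => ⟨⟨τ.symm ⟨i.1, i.2⟩, by
        rw [← hτp, Equiv.apply_symm_apply]
        exact i.1.2⟩, (τ.symm _).2⟩
      left_inv := fun i => by simp
      right_inv := fun i => by simp }
  exact Linked.sumIso (fun i j => Quotient.exact (i.2.trans j.2.symm)) (fun i => h i) τt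
    fun i => hτ ⟨i.1, i.2⟩

theorem sumIso_of_equiv {U : I → UniserialModule.{u, w} R} {V : J → UniserialModule.{u, w} R}
    (σ : I ≃ J) (hσ : ∀ i, SameMonogenyClass R (U i) (V (σ i)))
    (τ : {i // ¬ IsNonsmall R (U i)} ≃ {j // ¬ IsNonsmall R (V j)})
    (hτ : ∀ i, SameEpigenyClass R (U i.1) (V (τ i).1)) : SumIso U V := by
  let σ' : {i // ¬ IsNonsmall R (V (σ i))} ≃ {j // ¬ IsNonsmall R (V j)} :=
    σ.subtypeEquiv fun _ => Iff.rfl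
  refine .trans (sumIso_of_forall_sameMonogenyClass hσ (τ.trans σ'.symm) fun i => ?_)
    (.reindex V σ)
  have hi : σ (σ'.symm (τ i)) = τ i := congr_arg Subtype.val (σ'.apply_symm_apply (τ i))
  have hτi := hτ i
  rwa [← hi] at hτi

end UniserialModule

/-! ### Counting summands -/

section Modular

variable {α : Type*} [Lattice α] [BoundedOrder α] [IsModularLattice α] {ι κ : Type*}

theorem eq_bot_or_eq_bot_of_infIrred {a b k : α} (hk : InfIrred k) (hab : Disjoint a b)
    (h : Disjoint (a ⊔ b) k) : a = ⊥ ∨ b = ⊥ := by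
  have hinf : (k ⊔ a) ⊓ (k ⊔ b) = k := by
    rw [sup_inf_assoc_of_le _ le_sup_left, sup_comm k b,
      (hab.disjoint_sup_right_of_disjoint_sup_left h).eq_bot, sup_bot_eq]
  refine (hk.2 hinf).imp (fun hka => ?_) fun hkb => ?_
  · exact (h.mono_left le_sup_left).eq_bot_of_le (sup_eq_left.1 hka)
  · exact (h.mono_left le_sup_right).eq_bot_of_le (sup_eq_left.1 hkb)

theorem supIndep_erase_sup_inf [DecidableEq ι] {s : Finset ι} {a : ι → α} (hs : s.SupIndep a)
    {i₀ : ι} (hi₀ : i₀ ∈ s) {k : α} (hk : Disjoint (a i₀) k) :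
    (s.erase i₀).SupIndep fun i => (a i ⊔ a i₀) ⊓ k := by
  refine Finset.supIndep_iff_disjoint_erase.2 fun i hi => ?_
  obtain ⟨hne, his⟩ := Finset.mem_erase.1 hi
  have hdisj : Disjoint (a i) (((s.erase i₀).erase i).sup a ⊔ a i₀) := by
    refine (Finset.supIndep_iff_disjoint_erase.1 hs i his).mono_right (sup_le ?_ ?_)
    · exact Finset.sup_mono (Finset.erase_subset_erase i (Finset.erase_subset i₀ s))
    · exact Finset.le_sup (Finset.mem_erase.2 ⟨hne.symm, hi₀⟩)
  have hinf : (a i₀ ⊔ a i) ⊓ (((s.erase i₀).erase i).sup a ⊔ a i₀) = a i₀ := by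
    rw [sup_inf_assoc_of_le _ le_sup_right, hdisj.eq_bot, sup_bot_eq]
  refine disjoint_iff_inf_le.2 ((le_inf ?_ (inf_le_left.trans inf_le_right)).trans hk.le_bot)
  refine le_trans ?_ hinf.le
  refine inf_le_inf (inf_le_left.trans (sup_comm _ _).le) (Finset.sup_le fun j hj => ?_)
  exact inf_le_left.trans (sup_le_sup_right (Finset.le_sup hj) _)

theorem card_le_card_of_infIrred {s : Finset ι} {a : ι → α} (hs : s.SupIndep a)
    (ha : ∀ i ∈ s, a i ≠ ⊥) {F : Finset κ} {k : κ → α} (hk : ∀ j ∈ F, InfIrred (k j))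
    (h : Disjoint (s.sup a) (F.inf k)) : s.card ≤ F.card := by
  classical
  induction F using Finset.induction_on generalizing s a with
  | empty =>
    rw [Finset.inf_empty, disjoint_top, Finset.sup_eq_bot_iff] at h
    exact (Finset.card_eq_zero.2 (Finset.eq_empty_of_forall_notMem fun i hi => ha i hi (h i hi))).le
  | insert j F hj ih =>
    have hkF : ∀ l ∈ F, InfIrred (k l) := fun l hl => hk l (Finset.mem_insert_of_mem hl)
    rw [Finset.inf_insert, ← disjoint_assoc] at h
    rw [Finset.card_insert_of_notMem hj]
    by_cases hbot : ∀ i ∈ s, a i ⊓ k j ≠ ⊥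
    · refine (ih (hs.mono fun _ _ => inf_le_left) hbot hkF (h.mono_left ?_)).trans (Nat.le_succ _)
      exact Finset.sup_le fun i hi => inf_le_inf_right _ (Finset.le_sup hi)
    · push Not at hbot
      obtain ⟨i₀, hi₀, hbot⟩ := hbot
      rw [← Finset.card_erase_add_one hi₀, Nat.add_le_add_iff_right]
      refine ih (supIndep_erase_sup_inf hs hi₀ (disjoint_iff.2 hbot)) (fun i hi h₀ => ?_) hkF
        (h.mono_left ?_)
      · obtain ⟨hne, his⟩ := Finset.mem_erase.1 hi
        exact (eq_bot_or_eq_bot_of_infIrred (hk j (Finset.mem_insert_self j F))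
          (hs.pairwiseDisjoint his hi₀ hne) (disjoint_iff.2 h₀)).elim (ha i his) (ha i₀ hi₀)
      · exact Finset.sup_le fun i hi => inf_le_inf_right _
          (sup_le (Finset.le_sup (Finset.mem_of_mem_erase hi)) (Finset.le_sup hi₀))

end Modular

section DirectSumEntries

open DirectSum Function LinearMap

variable {R : Type*} [Ring R] {I J : Type*} {U : I → Type*} {V : J → Type*}
  [∀ i, AddCommGroup (U i)] [∀ i, Module R (U i)] [∀ j, AddCommGroup (V j)] [∀ j, Module R (V j)]

theorem IsUniserialModule.countable_setOf_component_comp_ne_zero {M : Type*} [AddCommGroup M]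
    [Module R M] (hM : IsUniserialModule R M) (f : M →ₗ[R] ⨁ i, U i) :
    {i | (component R I U i).comp f ≠ 0}.Countable := by
  let S : M → Set I := fun x => {i | f x i ≠ 0}
  have hfin : ∀ x, (S x).Finite := fun x => finite_setOf_directSum_apply_ne_zero (f x)
  have hsub : ∀ (r : R) x, S (r • x) ⊆ S x := fun r x i hi h =>
    hi (by simp [DirectSum.smul_apply, h])
  have hinj : Set.InjOn Set.ncard (Set.range S) := by
    rintro _ ⟨x, rfl⟩ _ ⟨y, rfl⟩ hxy
    rcases hM.exists_smul_eq_or x y with ⟨r, rfl⟩ | ⟨r, rfl⟩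
    · exact (Set.eq_of_subset_of_ncard_le (hsub r x) hxy.le (hfin x)).symm
    · exact Set.eq_of_subset_of_ncard_le (hsub r y) hxy.ge (hfin y)
  refine ((Set.countable_of_injective_of_countable_image hinj (Set.to_countable _)).sUnion ?_).mono
    fun i hi => ?_
  · rintro _ ⟨x, rfl⟩
    exact (hfin x).countable
  · obtain ⟨x, hx⟩ := DFunLike.ne_iff.1 hi
    exact ⟨S x, ⟨x, rfl⟩, hx⟩

variable [DecidableEq I]

theorem sup_range_lof_le_ker_component {s : Finset I} {i : I} (hi : i ∉ s) :
    (s.sup fun i => range (lof R I U i)) ≤ ker (component R I U i) := by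
  refine Finset.sup_le fun j hj => ?_
  rintro _ ⟨x, rfl⟩
  rw [mem_ker, component.of, dif_neg fun h : j = i => hi (h ▸ hj)]

theorem supIndep_range_lof (s : Finset I) : s.SupIndep fun i => range (lof R I U i) := by
  refine fun t _ i _ hit => Submodule.disjoint_def.2 ?_
  rintro _ ⟨x, rfl⟩ hx
  have hx0 : x = 0 := by
    simpa [component.lof_self] using sup_range_lof_le_ker_component hit hx
  rw [hx0, map_zero]

/-- The matrix entry `U i → V j` of a linear map between direct sums. -/
noncomputable def directSumEntry (f : (⨁ i, U i) →ₗ[R] ⨁ j, V j) (i : I) (j : J) :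
    U i →ₗ[R] V j :=
  component R J V j ∘ₗ f ∘ₗ lof R I U i

variable [DecidableEq J] (φ : (⨁ i, U i) ≃ₗ[R] ⨁ j, V j)

theorem exists_ne_zero_forall_entry_entry_eq_zero {s : Finset I} {F : Finset J} {i : I}
    [Nontrivial (U i)] (hU : IsUniserialModule R (U i)) (h : ∀ i' ∈ s, ∀ j ∉ F,
      ¬ Injective (directSumEntry φ.symm.toLinearMap j i' ∘ₗ directSumEntry φ.toLinearMap i j)) :
    ∃ u : U i, u ≠ 0 ∧ ∀ i' ∈ s, ∀ j ∉ F,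
      directSumEntry φ.symm.toLinearMap j i' (directSumEntry φ.toLinearMap i j u) = 0 := by
  obtain ⟨u, hu⟩ := exists_ne (0 : U i)
  let G := (finite_setOf_directSum_apply_ne_zero (φ (lof R I U i u))).toFinset
  obtain ⟨r, hr, hr0⟩ := hU.exists_smul_ne_zero_forall_eq_zero (s ×ˢ (G \ F))
    (fun p => directSumEntry φ.symm.toLinearMap p.2 p.1 ∘ₗ directSumEntry φ.toLinearMap i p.2)
    (fun p hp => by
      simp only [Finset.mem_product, Finset.mem_sdiff] at hp
      exact h p.1 hp.1 p.2 hp.2.2) hu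
  refine ⟨r • u, hr, fun i' hi' j hj => ?_⟩
  by_cases hjG : j ∈ G
  · exact hr0 (i', j) (by simp [hi', hj, hjG])
  · have hju : directSumEntry φ.toLinearMap i j u = 0 :=
      by_contra fun h => hjG ((Set.Finite.mem_toFinset _).2 h)
    rw [map_smul, hju, smul_zero, map_zero]

theorem card_le_card_of_not_injective_comp [∀ i, Nontrivial (U i)] [∀ j, Nontrivial (V j)]
    (hU : ∀ i, IsUniserialModule R (U i)) (hV : ∀ j, IsUniserialModule R (V j))
    {s : Finset I} {F : Finset J} (h : ∀ i ∈ s, ∀ i' ∈ s, ∀ j ∉ F,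
      ¬ Injective (directSumEntry φ.symm.toLinearMap j i' ∘ₗ directSumEntry φ.toLinearMap i j)) :
    s.card ≤ F.card := by
  let p : ∀ j, (⨁ i, U i) →ₗ[R] V j := fun j => component R J V j ∘ₗ φ.toLinearMap
  have hp : ∀ j, Surjective (p j) := fun j v =>
    ⟨φ.symm (lof R J V j v), by simp [p, component.lof_self]⟩
  let W : Submodule R (⨁ i, U i) :=
    ⨅ i' ∈ s, ⨅ j ∉ F, ker (directSumEntry φ.symm.toLinearMap j i' ∘ₗ p j)
  have hW : ∀ x, x ∈ W ↔ ∀ i' ∈ s, ∀ j ∉ F,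
      directSumEntry φ.symm.toLinearMap j i' (p j x) = 0 := fun x => by
    simp [W, Submodule.mem_iInf]
  refine card_le_card_of_infIrred (a := fun i => range (lof R I U i) ⊓ W)
    ((supIndep_range_lof s).mono fun _ _ => inf_le_left) (fun i hi => ?_)
    (k := fun j => ker (p j)) (fun j _ => (hV j).infIrred_ker (hp j)) ?_
  · obtain ⟨u, hu, hu0⟩ := exists_ne_zero_forall_entry_entry_eq_zero φ (hU i) (h i hi)
    refine (Submodule.ne_bot_iff _).2 ⟨lof R I U i u, ⟨⟨u, rfl⟩, (hW _).2 hu0⟩, fun h0 => hu ?_⟩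
    simpa [component.lof_self] using congr_arg (component R I U i) h0
  · refine Submodule.disjoint_def.2 fun x hxs hxF => DFinsupp.ext fun i => ?_
    have hxW : x ∈ W := (Finset.sup_le fun i _ => inf_le_right : s.sup _ ≤ W) hxs
    by_cases hi : i ∈ s
    · have hx := apply_eq_finsum_apply_lof (component R I U i ∘ₗ φ.symm.toLinearMap) (φ x)
      rw [LinearMap.comp_apply, LinearEquiv.coe_coe, φ.symm_apply_apply] at hx
      refine hx.trans (finsum_eq_zero_of_forall_eq_zero fun j => ?_)
      by_cases hj : j ∈ F
      · have hpx : φ x j = 0 := Finset.inf_le (f := fun j => ker (p j)) hj hxF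
        rw [hpx, map_zero, map_zero]
      · exact (hW x).1 hxW i hi j hj
    · have hle : (s.sup fun i => range (lof R I U i) ⊓ W) ≤ s.sup fun i => range (lof R I U i) :=
        Finset.sup_mono_fun fun _ _ => inf_le_left
      exact sup_range_lof_le_ker_component hi (hle hxs)

theorem exists_injective_entry_comp {i : I} [Nontrivial (U i)] (hU : IsUniserialModule R (U i)) :
    ∃ j, Injective (directSumEntry φ.symm.toLinearMap j i ∘ₗ directSumEntry φ.toLinearMap i j) :=
  exists_injective_component (f := φ.toLinearMap ∘ₗ lof R I U i)
    (g := component R I U i ∘ₗ φ.symm.toLinearMap) hU <| LinearMap.ext fun x => by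
      simp [component.lof_self]

theorem exists_surjective_entry_comp {i : I} [Nontrivial (U i)] (hU : IsUniserialModule R (U i))
    (hU' : ¬ IsNonsmall R (U i)) :
    ∃ j, Surjective (directSumEntry φ.symm.toLinearMap j i ∘ₗ directSumEntry φ.toLinearMap i j) :=
  exists_surjective_component (f := φ.toLinearMap ∘ₗ lof R I U i)
    (g := component R I U i ∘ₗ φ.symm.toLinearMap) hU hU' <| LinearMap.ext fun x => by
      simp [component.lof_self]

end DirectSumEntries

section Count

open DirectSum Function

theorem mk_le_mk_of_countable_preimage {A B : Type w} (g : A → B)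
    (hg : ∀ b, (g ⁻¹' {b}).Countable) (hfin : Finite B → ∀ s : Finset A, s.card ≤ Nat.card B) :
    Cardinal.mk A ≤ Cardinal.mk B := by
  rcases finite_or_infinite B with hB | hB
  · exact (Cardinal.card_le_of (hfin hB)).trans Nat.cast_card.le
  · refine (Cardinal.mk_le_mk_mul_of_mk_preimage_le g fun b => (hg b).le_aleph0).trans_eq ?_
    exact Cardinal.mul_eq_left (Cardinal.aleph0_le_mk B) (Cardinal.aleph0_le_mk B)
      Cardinal.aleph0_ne_zero

theorem exists_equiv_of_forall_mk_eq {A B : Type w} {X : Type*} (r : Setoid X) (p : A → X)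
    (q : B → X) (h : ∀ x, Cardinal.mk {a // r (p a) x} = Cardinal.mk {b // r (q b) x}) :
    ∃ σ : A ≃ B, ∀ a, r (p a) (q (σ a)) := by
  have h' : ∀ c : Quotient r, Nonempty
      ({a // (Quotient.mk r (p a)) = c} ≃ {b // (Quotient.mk r (q b)) = c}) := fun c => by
    induction c using Quotient.inductionOn with
    | h x =>
      obtain ⟨e⟩ := Cardinal.eq.1 (h x)
      exact ⟨(Equiv.subtypeEquivRight fun a => Quotient.eq).trans
        (e.trans (Equiv.subtypeEquivRight fun b => Quotient.eq.symm))⟩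
  let e := fun c => (h' c).some
  refine ⟨(Equiv.sigmaFiberEquiv fun a => Quotient.mk r (p a)).symm.trans
    ((Equiv.sigmaCongrRight e).trans (Equiv.sigmaFiberEquiv fun b => Quotient.mk r (q b))),
    fun a => ?_⟩
  exact Quotient.exact (e _ ⟨a, rfl⟩).2.symm

theorem mk_subtype_le_of_entry_ne_zero {R : Type*} [Ring R] {I J : Type w} [DecidableEq J]
    {U : I → Type*} {V : J → Type*} [∀ i, AddCommGroup (U i)] [∀ i, Module R (U i)]
    [∀ j, AddCommGroup (V j)] [∀ j, Module R (V j)] (hV : ∀ j, IsUniserialModule R (V j))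
    (f : (⨁ j, V j) →ₗ[R] ⨁ i, U i) {P : I → Prop} {Q : J → Prop}
    (h : ∀ i, P i → ∃ j, Q j ∧ directSumEntry f j i ≠ 0)
    (hfin : Finite {j // Q j} → ∀ s : Finset I, (∀ i ∈ s, P i) → s.card ≤ Nat.card {j // Q j}) :
    Cardinal.mk {i // P i} ≤ Cardinal.mk {j // Q j} := by
  choose g hgQ hg using h
  refine mk_le_mk_of_countable_preimage (fun i : {i // P i} => ⟨g i i.2, hgQ i i.2⟩) (fun j => ?_)
    fun hQ s => ?_
  · refine (((hV j).countable_setOf_component_comp_ne_zero (f ∘ₗ lof R J V j)).preimage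
      Subtype.val_injective).mono ?_
    rintro i rfl
    exact hg i i.2
  · rw [← Finset.card_map (Embedding.subtype P)]
    refine hfin hQ _ fun i hi => ?_
    obtain ⟨i, -, rfl⟩ := Finset.mem_map.1 hi
    exact i.2

variable {R : Type*} [Ring R] {M M' N : Type*} [AddCommGroup M] [Module R M] [AddCommGroup M']
  [Module R M'] [AddCommGroup N] [Module R N] [Nontrivial M]

theorem SameMonogenyClass.of_injective_comp (hN : IsUniserialModule R N) {f : M →ₗ[R] N}
    {g : N →ₗ[R] M'} (h : SameMonogenyClass R M M') (hgf : Injective (g ∘ₗ f)) :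
    SameMonogenyClass R N M := by
  obtain ⟨k, hk⟩ := h.2
  exact ⟨⟨k ∘ₗ g, hk.comp (hN.injective_left_of_comp hgf)⟩, f, .of_comp (f := g) hgf⟩

theorem SameEpigenyClass.of_surjective_comp (hN : IsUniserialModule R N) {f : M →ₗ[R] N}
    {g : N →ₗ[R] M} (hgf : Surjective (g ∘ₗ f)) : SameEpigenyClass R N M :=
  ⟨⟨g, .of_comp (g := f) hgf⟩, f, hN.surjective_right_of_comp hgf⟩

end Count

section Exchange

open DirectSum Function

variable {R : Type*} [Ring R] {K L M B D : Type*} [AddCommGroup M] [Module R M] [AddCommGroup B]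
  [Module R B] [AddCommGroup D] [Module R D] {Q : K → Type*} [∀ k, AddCommGroup (Q k)]
  [∀ k, Module R (Q k)]

theorem nonempty_linearEquiv_of_bijective_component (φ : (M × B) ≃ₗ[R] ⨁ k, Q k)
    (e : Option L ≃ K) (h : Bijective fun m => φ (m, 0) (e none)) :
    Nonempty (B ≃ₗ[R] ⨁ l, Q (e (some l))) :=
  nonempty_linearEquiv_of_prod (φ.trans (directSumSplitEquiv Q e)) h

theorem nonempty_linearEquiv_of_bijective_exchange (φ : (M × B) ≃ₗ[R] ⨁ k, Q k)
    (e : Option (Option L) ≃ K) (ψ : (Q (e (some none)) × Q (e none)) ≃ₗ[R] M × D)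
    (h : Bijective fun m => (ψ (φ (m, 0) (e (some none)), φ (m, 0) (e none))).1) :
    Nonempty (B ≃ₗ[R] D × ⨁ l, Q (e (some (some l)))) := by
  let Θ : (⨁ k, Q k) ≃ₗ[R] M × (D × ⨁ l : L, Q (e (some (some l)))) :=
    (directSumSplitEquiv Q e).trans <|
    ((LinearEquiv.refl R (Q (e none))).prodCongr
      (directSumSplitEquiv (fun o => Q (e (some o))) (Equiv.refl (Option L)))).trans <|
    (LinearEquiv.prodAssoc R _ _ _).symm.trans <|
    (((LinearEquiv.prodComm R _ _).trans ψ).prodCongr (LinearEquiv.refl R _)).trans <|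
    LinearEquiv.prodAssoc R _ _ _
  exact nonempty_linearEquiv_of_prod (φ.trans Θ) h

end Exchange

namespace UniserialModule

open DirectSum Function

variable {R : Type u} [Ring R]

section Cancel

variable {K : Type*} {V : K → UniserialModule.{u, w} R} {U : UniserialModule.{u, w} R} {B : Type*}
  [AddCommGroup B] [Module R B]

theorem exists_linearEquiv_prod_of_comp {L : Type*} (φ : (U × B) ≃ₗ[R] ⨁ k, V k)
    (e : Option (Option L) ≃ K) {a : ∀ k, U →ₗ[R] V k} (ha : ∀ k u, a k u = φ (u, 0) k)
    {f : V (e (some none)) →ₗ[R] U} {b : V (e none) →ₗ[R] U}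
    (hf : Injective (f ∘ₗ a _)) (hf' : ¬ Surjective (f ∘ₗ a _))
    (hb : Surjective (b ∘ₗ a _)) (hb' : ¬ Injective (b ∘ₗ a _)) :
    ∃ D : UniserialModule.{u, w} R, SameEpigenyClass R D (V (e (some none))) ∧
      Nonempty (B ≃ₗ[R] D × ⨁ l, V (e (some (some l)))) := by
  obtain ⟨D, -, hD, ψ, hψ⟩ := exists_exchange (V (e (some none))) (V (e none)) U
    (.of_comp (f := f) hf) ((V _).isUniserialModule.surjective_right_of_comp hb)
    ((V _).isUniserialModule.injective_left_of_comp hf) (.of_comp (g := a _) hb)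
    (U.isUniserialModule.bijective_add U.isUniserialModule hf hf' hb hb')
  refine ⟨D, hD, nonempty_linearEquiv_of_bijective_exchange φ e ψ ?_⟩
  simp only [← ha, hψ]
  exact bijective_id

end Cancel

theorem exists_linearEquiv_directSum_of_prod {K : Type w} {V : K → UniserialModule.{u, w} R}
    {U : UniserialModule.{u, w} R} (hU : ¬ IsNonsmall R U) {B : Type*} [AddCommGroup B] [Module R B]
    (φ : (U × B) ≃ₗ[R] ⨁ k, V k) :
    ∃ (L : Type w) (e : Option L ≃ K) (W : L → UniserialModule.{u, w} R),
      SameEpigenyClass R (V (e none)) U ∧ (∀ l, SameEpigenyClass R (W l) (V (e (some l)))) ∧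
        Nonempty (B ≃ₗ[R] ⨁ l, W l) := by
  classical
  let a : ∀ k, U →ₗ[R] V k := fun k =>
    component R K (fun k => V k) k ∘ₗ φ.toLinearMap ∘ₗ LinearMap.inl R U B
  let b : ∀ k, V k →ₗ[R] U := fun k =>
    (LinearMap.fst R U B ∘ₗ φ.symm.toLinearMap) ∘ₗ lof R K (fun k => V k) k
  have hid : (LinearMap.fst R U B ∘ₗ φ.symm.toLinearMap) ∘ₗ
      φ.toLinearMap ∘ₗ LinearMap.inl R U B = LinearMap.id := LinearMap.ext fun u => by simp
  obtain ⟨k, hk⟩ : ∃ k, Surjective (b k ∘ₗ a k) :=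
    exists_surjective_component U.isUniserialModule hU hid
  obtain ⟨l, hl⟩ : ∃ l, Injective (b l ∘ₗ a l) := exists_injective_component U.isUniserialModule hid
  by_cases hbij : ∃ k, Bijective (b k ∘ₗ a k)
  · obtain ⟨k, hk⟩ := hbij
    obtain ⟨L, e, rfl⟩ : ∃ (L : Type w) (e : Option L ≃ K), e none = k :=
      ⟨{j // j ≠ k}, Equiv.optionSubtypeNe k, rfl⟩
    exact ⟨L, e, fun l => V (e (some l)), .of_surjective_comp (V _).isUniserialModule hk.2,
      fun _ => .refl, nonempty_linearEquiv_of_bijective_component φ e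
        ⟨.of_comp (f := b _) (g := a _) hk.1,
          (V _).isUniserialModule.surjective_right_of_comp hk.2⟩⟩
  · push Not at hbij
    have hk' : ¬ Injective (b k ∘ₗ a k) := fun h => hbij k ⟨h, hk⟩
    have hl' : ¬ Surjective (b l ∘ₗ a l) := fun h => hbij l ⟨hl, h⟩
    have hlk : l ≠ k := by
      rintro rfl
      exact hk' hl
    obtain ⟨L, e, rfl, rfl⟩ : ∃ (L : Type w) (e : Option (Option L) ≃ K),
        e none = k ∧ e (some none) = l :=
      ⟨{c // c ≠ (⟨l, hlk⟩ : {j // j ≠ k})},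
        (Equiv.optionCongr (Equiv.optionSubtypeNe _)).trans (Equiv.optionSubtypeNe k), rfl, rfl⟩
    obtain ⟨D, hD, ⟨θ⟩⟩ :=
      exists_linearEquiv_prod_of_comp φ e (a := a) (fun _ _ => rfl) hl hl' hk hk'
    let W : Option L → UniserialModule.{u, w} R := fun o => o.elim D fun l => V (e (some (some l)))
    exact ⟨Option L, e, W, .of_surjective_comp (V _).isUniserialModule hk,
      Option.forall.2 ⟨hD, fun _ => .refl⟩,
      ⟨θ.trans (directSumSplitEquiv (fun o => W o) (Equiv.refl (Option L))).symm⟩⟩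

namespace SumIso

variable {I J : Type w} {U : I → UniserialModule.{u, w} R} {V : J → UniserialModule.{u, w} R}

theorem mk_setOf_sameMonogenyClass_le (h : SumIso U V) (T : UniserialModule.{u, w} R) :
    Cardinal.mk {i // SameMonogenyClass R (U i) T} ≤
      Cardinal.mk {j // SameMonogenyClass R (V j) T} := by
  classical
  obtain ⟨φ⟩ := h
  have hV : ∀ {i i' j}, SameMonogenyClass R (U i) T → SameMonogenyClass R (U i') T →
      Injective (directSumEntry φ.symm.toLinearMap j i' ∘ₗ directSumEntry φ.toLinearMap i j) →
      SameMonogenyClass R (V j) T := fun {_ _ j} hi hi' hinj =>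
    .trans (.of_injective_comp (V j).isUniserialModule (hi.trans hi'.symm) hinj) hi
  refine mk_subtype_le_of_entry_ne_zero (fun j => (V j).isUniserialModule) φ.symm.toLinearMap
    (fun i hi => ?_) fun hT s hs => ?_
  · obtain ⟨j, hj⟩ := exists_injective_entry_comp φ (U i).isUniserialModule
    refine ⟨j, hV hi hi hj, fun h0 => ?_⟩
    obtain ⟨x, hx⟩ := exists_ne (0 : U i)
    exact hx (hj (by simp [h0]))
  · have hfin : Set.Finite {j | SameMonogenyClass R (V j) T} := hT
    refine (card_le_card_of_not_injective_comp φ (F := hfin.toFinset)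
      (fun i => (U i).isUniserialModule) (fun j => (V j).isUniserialModule)
      fun i hi i' hi' j hj hinj => hj ?_).trans_eq (Set.ncard_eq_toFinset_card _ hfin).symm
    exact hfin.mem_toFinset.2 (hV (hs i hi) (hs i' hi') hinj)

theorem exists_injective_sameEpigenyClass (n : ℕ) {I J : Type w} {U : I → UniserialModule.{u, w} R}
    {V : J → UniserialModule.{u, w} R} (h : SumIso U V) {p : Fin n → I} (hp : Injective p)
    (hU : ∀ k, ¬ IsNonsmall R (U (p k))) :
    ∃ q : Fin n → J, Injective q ∧ ∀ k, SameEpigenyClass R (V (q k)) (U (p k)) := by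
  classical
  induction n generalizing I J with
  | zero => exact ⟨finZeroElim, fun k => k.elim0, fun k => k.elim0⟩
  | succ n ih =>
    obtain ⟨φ⟩ := h
    obtain ⟨L, e, W, he, hW, hB⟩ := exists_linearEquiv_directSum_of_prod (hU 0)
      ((directSumSplitEquiv (fun i => U i) (Equiv.optionSubtypeNe (p 0))).symm.trans φ)
    obtain ⟨q, hq, hq'⟩ := ih (U := fun i : {i // i ≠ p 0} => U i) (V := W) hB
      (p := fun k => ⟨p k.succ, fun h => Fin.succ_ne_zero k (hp h)⟩)
      (fun k l hkl => Fin.succ_injective _ (hp (congr_arg Subtype.val hkl)))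
      (fun k => hU k.succ)
    refine ⟨Fin.cons (e none) fun k => e (some (q k)), Fin.cons_injective_iff.2 ⟨?_, ?_⟩,
      Fin.cases he fun k => (hW (q k)).symm.trans (hq' k)⟩
    · rintro ⟨k, hk⟩
      exact Option.some_ne_none _ (e.injective hk)
    · exact fun k l hkl => hq (Option.some_injective _ (e.injective hkl))

theorem mk_setOf_sameEpigenyClass_le (h : SumIso U V) (T : UniserialModule.{u, w} R) :
    Cardinal.mk {i // ¬ IsNonsmall R (U i) ∧ SameEpigenyClass R (U i) T} ≤
      Cardinal.mk {j // ¬ IsNonsmall R (V j) ∧ SameEpigenyClass R (V j) T} := by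
  classical
  obtain ⟨φ⟩ := id h
  have hV : ∀ {i j}, ¬ IsNonsmall R (U i) ∧ SameEpigenyClass R (U i) T →
      SameEpigenyClass R (V j) (U i) →
      ¬ IsNonsmall R (V j) ∧ SameEpigenyClass R (V j) T := fun {i j} hi hij =>
    ⟨fun hj => hi.1 (hj.of_sameEpigenyClass (V j).isUniserialModule (U i).isUniserialModule hij),
      hij.trans hi.2⟩
  refine mk_subtype_le_of_entry_ne_zero (fun j => (V j).isUniserialModule) φ.symm.toLinearMap
    (fun i hi => ?_) fun _ s hs => ?_
  · obtain ⟨j, hj⟩ := exists_surjective_entry_comp φ (U i).isUniserialModule hi.1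
    refine ⟨j, hV hi (.of_surjective_comp (V j).isUniserialModule hj), fun h0 => ?_⟩
    obtain ⟨x, hx⟩ := exists_ne (0 : U i)
    obtain ⟨y, rfl⟩ := hj x
    exact hx (by simp [h0])
  · let p : Fin s.card → I := fun k => s.equivFin.symm k
    have hp : ∀ k, ¬ IsNonsmall R (U (p k)) ∧ SameEpigenyClass R (U (p k)) T := fun k =>
      hs _ (s.equivFin.symm k).2
    obtain ⟨q, hq, hqp⟩ := h.exists_injective_sameEpigenyClass s.card
      (Subtype.val_injective.comp s.equivFin.symm.injective) fun k => (hp k).1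
    simpa using Nat.card_le_card_of_injective
      (fun k => (⟨q k, hV (hp k) (hqp k)⟩ :
        {j // ¬ IsNonsmall R (V j) ∧ SameEpigenyClass R (V j) T}))
      fun k l hkl => hq (congr_arg Subtype.val hkl)

variable (R) in
/-- The equivalence relation of having the same monogeny class. -/
def monogenySetoid : Setoid (UniserialModule.{u, w} R) where
  r U V := SameMonogenyClass R U V
  iseqv := ⟨fun _ => .refl, .symm, .trans⟩

variable (R) in
/-- The equivalence relation of having the same epigeny class. -/
def epigenySetoid : Setoid (UniserialModule.{u, w} R) where
  r U V := SameEpigenyClass R U V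
  iseqv := ⟨fun _ => .refl, .symm, .trans⟩

theorem exists_equiv_sameMonogenyClass (h : SumIso U V) :
    ∃ σ : I ≃ J, ∀ i, SameMonogenyClass R (U i) (V (σ i)) :=
  exists_equiv_of_forall_mk_eq (monogenySetoid R) U V fun T =>
    le_antisymm (h.mk_setOf_sameMonogenyClass_le T) (h.symm.mk_setOf_sameMonogenyClass_le T)

theorem exists_equiv_sameEpigenyClass (h : SumIso U V) :
    ∃ τ : {i // ¬ IsNonsmall R (U i)} ≃ {j // ¬ IsNonsmall R (V j)},
      ∀ i, SameEpigenyClass R (U i.1) (V (τ i).1) := by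
  refine exists_equiv_of_forall_mk_eq (epigenySetoid R)
    (fun i : {i // ¬ IsNonsmall R (U i)} => U i.1) (fun j : {j // ¬ IsNonsmall R (V j)} => V j.1)
    fun T => ?_
  have hmk {K : Type w} {W : K → UniserialModule.{u, w} R} :=
    Cardinal.mk_congr (Equiv.subtypeSubtypeEquivSubtypeInter (fun k => ¬ IsNonsmall R (W k))
      fun k => SameEpigenyClass R (W k) T)
  refine hmk.trans (.trans ?_ hmk.symm)
  exact (h.mk_setOf_sameEpigenyClass_le T).antisymm (h.symm.mk_setOf_sameEpigenyClass_le T)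

end SumIso
end UniserialModule

/-- Příhoda's weak Krull-Schmidt theorem for arbitrary direct sums of nonzero uniserial
modules: `⨁ᵢ U i ≅ ⨁ⱼ V j` iff there is a bijection `σ : I → J` matching monogeny classes
and a bijection `τ` between the quasismall indices matching epigeny classes. -/
theorem direct_sums_of_uniserial_isomorphic_iff
    {R : Type u} [Ring R] {I J : Type w}
    (U : I → Type w) (V : J → Type w)
    [∀ i, AddCommGroup (U i)] [∀ i, Module R (U i)]
    [∀ j, AddCommGroup (V j)] [∀ j, Module R (V j)]
    (hU : ∀ i, IsUniserialModule R (U i)) (hU0 : ∀ i, ∃ x : U i, x ≠ 0)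
    (hV : ∀ j, IsUniserialModule R (V j)) (hV0 : ∀ j, ∃ x : V j, x ≠ 0) :
    Nonempty ((DirectSum I U) ≃ₗ[R] (DirectSum J V)) ↔
      ((∃ σ : I ≃ J, ∀ i, SameMonogenyClass R (U i) (V (σ i))) ∧
        ∃ τ : {i : I // IsQuasismall.{u, w, w} R (U i)} ≃
            {j : J // IsQuasismall.{u, w, w} R (V j)},
          ∀ i, SameEpigenyClass R (U i.1) (V (τ i).1)) := by
  have hU' : ∀ i, Nontrivial (U i) := fun i => (hU0 i).elim fun x hx => nontrivial_of_ne x 0 hx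
  have hV' : ∀ j, Nontrivial (V j) := fun j => (hV0 j).elim fun x hx => nontrivial_of_ne x 0 hx
  let U' : I → UniserialModule.{u, w} R := fun i => ⟨U i, hU i⟩
  let V' : J → UniserialModule.{u, w} R := fun j => ⟨V j, hV j⟩
  let eU : {i // IsQuasismall.{u, w, w} R (U i)} ≃ {i // ¬ IsNonsmall R (U' i)} :=
    Equiv.subtypeEquivRight fun i => isQuasismall_iff_not_isNonsmall (hU i)
  let eV : {j // IsQuasismall.{u, w, w} R (V j)} ≃ {j // ¬ IsNonsmall R (V' j)} :=
    Equiv.subtypeEquivRight fun j => isQuasismall_iff_not_isNonsmall (hV j)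
  constructor
  · intro h
    have hsum : UniserialModule.SumIso U' V' := h
    obtain ⟨τ, hτ⟩ := hsum.exists_equiv_sameEpigenyClass
    exact ⟨hsum.exists_equiv_sameMonogenyClass, (eU.trans τ).trans eV.symm, fun i => hτ (eU i)⟩
  · rintro ⟨⟨σ, hσ⟩, τ, hτ⟩
    exact UniserialModule.sumIso_of_equiv (U := U') (V := V') σ hσ ((eU.symm.trans τ).trans eV)
      fun i => hτ (eU.symm i)
end

section
/- Let R be a ring, let {A_i : i ∈ I} be a countable family of slender right R-modules each of which has a local endomorphism ring, and let {B_j : j ∈ J} be a countable family of indecomposable slender right R-modules. If the R-modules ∏_{i∈I} A_i and ∏_{j∈J} B_j are isomorphic, then there exists a bijection σ : I → J such that A_i ≅ B_{σ(i)} for every i ∈ I. -/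
/-- A module `M` is slender if every homomorphism `f : R^ω → M` from the countable direct
product of copies of `R` kills almost all of the canonical unit vectors `eₙ`. -/
def IsSlender (R : Type*) [Ring R] (M : Type*) [AddCommGroup M] [Module R M] : Prop :=
  ∀ f : (ℕ → R) →ₗ[R] M, ∃ n₀ : ℕ, ∀ n ≥ n₀, f (Pi.single n 1) = 0

/-- A module is indecomposable if it is nonzero and is not the internal direct sum of two
nonzero submodules. -/
def IsIndecomposableModule (R : Type*) [Ring R] (M : Type*) [AddCommGroup M] [Module R M] :
    Prop :=
  (∃ x : M, x ≠ 0) ∧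
    ∀ N P : Submodule R M, N ⊓ P = ⊥ → N ⊔ P = ⊤ → N = ⊥ ∨ P = ⊥

/-!
Let `X` be slender with local endomorphism ring `E`. Then `Hom(M, X)` modulo the homomorphisms `g`
with `g ∘ f ∈ J(E)` for all `f : X → M` is a vector space over the division ring `E / J(E)`, and it
vanishes when `M` is indecomposable and not isomorphic to `X`. A homomorphism from a countable
product to `X` factors through finitely many factors, so for `M = ∏ B j` the projections onto the
factors isomorphic to `X` form a basis: the multiplicity of `X` is a dimension. Nor can `B j` differ
from every `A i`, as then, by the left-right symmetry of the Jacobson radical, all homomorphisms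
`∏ A i → B j` would be radical, whereas one of them splits.
-/

section LocalRing

variable {E : Type*} [Ring E]

theorem eq_zero_or_eq_one_of_isIdempotentElem [IsLocalRing E] {a : E}
    (ha : IsIdempotentElem a) : a = 0 ∨ a = 1 := by
  rcases IsLocalRing.isUnit_or_isUnit_of_add_one (add_sub_cancel a 1) with hu | hu
  · exact Or.inr ((IsIdempotentElem.iff_eq_one_of_isUnit hu).1 ha)
  · exact Or.inl (sub_eq_self.1 ((IsIdempotentElem.iff_eq_one_of_isUnit hu).1 ha.one_sub))

theorem isDedekindFiniteMonoid_of_isLocalRing [IsLocalRing E] : IsDedekindFiniteMonoid E where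
  mul_eq_one_symm {a b} hab := by
    have hidem : IsIdempotentElem (b * a) := by
      rw [IsIdempotentElem, mul_assoc, ← mul_assoc a, hab, one_mul]
    refine (eq_zero_or_eq_one_of_isIdempotentElem hidem).resolve_left fun hba => ?_
    have : (1 : E) = a * (b * a) * b := by rw [← mul_assoc, hab, one_mul, hab]
    simp [hba] at this

theorem mem_jacobson_iff_exists_mul_one_add_mul_eq_one {x : E} :
    x ∈ Ring.jacobson E ↔ ∀ y, ∃ z, z * (1 + y * x) = 1 := by
  simp only [← Ideal.jacobson_bot, Ideal.mem_jacobson_iff, Ideal.mem_bot, sub_eq_zero, mul_add,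
    mul_one, mul_assoc, add_comm]

theorem not_isUnit_of_mem_jacobson [Nontrivial E] {x : E} (hx : x ∈ Ring.jacobson E) :
    ¬IsUnit x := fun hu =>
  (Ring.jacobson_lt_top E).ne (Ideal.eq_top_of_isUnit_mem _ hx hu)

theorem mem_jacobson_iff_not_isUnit [IsLocalRing E] {x : E} :
    x ∈ Ring.jacobson E ↔ ¬IsUnit x := by
  refine ⟨not_isUnit_of_mem_jacobson, fun hx => ?_⟩
  have := isDedekindFiniteMonoid_of_isLocalRing (E := E)
  refine mem_jacobson_iff_exists_mul_one_add_mul_eq_one.2 fun y => ?_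
  have hsum : -(y * x) + (1 + y * x) = 1 := by abel
  rcases IsLocalRing.isUnit_or_isUnit_of_add_one hsum with hu | hu
  · exact absurd (isUnit_of_mul_isUnit_right (IsUnit.neg_iff _ |>.1 hu)) hx
  · exact hu.exists_left_inv

instance invariantBasisNumber_quotient_jacobson [IsLocalRing E] :
    InvariantBasisNumber (E ⧸ Ring.jacobson E) := by
  have : Nontrivial (E ⧸ Ring.jacobson E) :=
    Ideal.Quotient.nontrivial_iff.2 (Ring.jacobson_lt_top E).ne
  let _ : DivisionRing (E ⧸ Ring.jacobson E) := DivisionRing.ofIsUnitOrEqZero fun a => by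
    obtain ⟨a, rfl⟩ := Ideal.Quotient.mk_surjective a
    rw [Ideal.Quotient.eq_zero_iff_mem, mem_jacobson_iff_not_isUnit]
    exact (em (IsUnit a)).imp_left (IsUnit.map _)
  infer_instance

end LocalRing

section Indecomposable

variable {R : Type*} [Ring R] {M N : Type*} [AddCommGroup M] [AddCommGroup N] [Module R M]
  [Module R N]

theorem isIndecomposableModule_iff_forall_isIdempotentElem :
    IsIndecomposableModule R M ↔ Nontrivial M ∧
      ∀ a : Module.End R M, IsIdempotentElem a → a = 0 ∨ a = 1 := by
  rw [IsIndecomposableModule, ← nontrivial_iff_exists_ne]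
  refine and_congr_right fun _ => ⟨fun h a ha => ?_, fun h N P hinf hsup => ?_⟩
  · have hc := LinearMap.IsIdempotentElem.isCompl ha
    rcases h _ _ hc.inf_eq_bot hc.sup_eq_top with h0 | h0
    · exact Or.inl (LinearMap.range_eq_bot.1 h0)
    · refine Or.inr (LinearMap.ext fun x => LinearMap.ker_eq_bot.1 h0 ?_)
      exact LinearMap.congr_fun ha x
  · have hc : IsCompl N P := IsCompl.of_eq hinf hsup
    rcases h _ (Submodule.isIdempotentElem_projection hc) with h0 | h0
    · left
      rw [← Submodule.range_projection hc, h0, LinearMap.range_zero]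
    · right
      rw [← Submodule.ker_projection hc, h0, Module.End.one_eq_id, LinearMap.ker_id]

theorem nontrivial_of_nontrivial_end [Nontrivial (Module.End R M)] : Nontrivial M :=
  not_subsingleton_iff_nontrivial.1 fun _ => not_subsingleton (Module.End R M) inferInstance

theorem isIndecomposableModule_of_isLocalRing_end [IsLocalRing (Module.End R M)] :
    IsIndecomposableModule R M :=
  isIndecomposableModule_iff_forall_isIdempotentElem.2
    ⟨nontrivial_of_nontrivial_end (R := R), fun _ => eq_zero_or_eq_one_of_isIdempotentElem⟩

theorem IsIndecomposableModule.nontrivial (hM : IsIndecomposableModule R M) : Nontrivial M :=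
  (isIndecomposableModule_iff_forall_isIdempotentElem.1 hM).1

theorem IsIndecomposableModule.bijective_of_isUnit_comp [Nontrivial M]
    (hN : IsIndecomposableModule R N) {p : N →ₗ[R] M} {q : M →ₗ[R] N}
    (h : IsUnit (p ∘ₗ q : Module.End R M)) : Function.Bijective q := by
  obtain ⟨u, hu : u * (p ∘ₗ q) = 1⟩ := h.exists_left_inv
  have hleft : Function.LeftInverse (u ∘ₗ p) q := LinearMap.congr_fun hu
  let a : Module.End R N := q ∘ₗ u ∘ₗ p
  have ha : IsIdempotentElem a := LinearMap.ext fun y => congrArg q (hleft _)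
  rcases (isIndecomposableModule_iff_forall_isIdempotentElem.1 hN).2 a ha with h0 | h1
  · obtain ⟨x, hx⟩ := exists_ne (0 : M)
    refine absurd (hleft.injective ?_) hx
    calc q x = a (q x) := (congrArg q (hleft x)).symm
      _ = q 0 := by rw [h0, LinearMap.zero_apply, map_zero]
  · exact ⟨hleft.injective, fun y => ⟨u (p y), LinearMap.congr_fun h1 y⟩⟩

end Indecomposable

section Slender

variable {R : Type*} [Ring R] {I : Type*} {A : I → Type*} [∀ i, AddCommGroup (A i)]
  [∀ i, Module R (A i)] {M : Type*} [AddCommGroup M] [Module R M]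

theorem IsSlender.exists_forall_eq_zero_of_forall_lt (hM : IsSlender R M)
    (f : (∀ i, A i) →ₗ[R] M) (c : I → ℕ) :
    ∃ n, ∀ x : ∀ i, A i, (∀ i, c i < n → x i = 0) → f x = 0 := by
  by_contra! hcon
  choose x hx hfx using hcon
  -- `g` sends `(rₙ)` to the infinite sum of the `rₙ • xₙ`, which is finite in each coordinate.
  let g : (ℕ → R) →ₗ[R] ∀ i, A i := LinearMap.pi fun i =>
    ∑ n ∈ Finset.range (c i + 1), (LinearMap.proj n).smulRight (x n i)
  have hg : ∀ n, g (Pi.single n 1) = x n := fun n => by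
    ext i
    have : c i < n → x n i = 0 := hx n i
    simpa [g, Pi.single_apply, ite_smul] using fun h => (this h).symm
  obtain ⟨n, hn⟩ := hM (f ∘ₗ g)
  exact hfx n (by simpa [hg] using hn n le_rfl)

theorem IsSlender.exists_finset_eq_sum [DecidableEq I] [Countable I] (hM : IsSlender R M)
    (f : (∀ i, A i) →ₗ[R] M) :
    ∃ s : Finset I, f = ∑ i ∈ s, (f ∘ₗ LinearMap.single R A i) ∘ₗ LinearMap.proj i := by
  obtain ⟨c, hc⟩ := exists_injective_nat I
  obtain ⟨n, hn⟩ := hM.exists_forall_eq_zero_of_forall_lt f c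
  have hfin : {i | c i < n}.Finite := (Set.finite_lt_nat n).preimage hc.injOn
  refine ⟨hfin.toFinset, LinearMap.ext fun x => ?_⟩
  have htail : f (x - ∑ i ∈ hfin.toFinset, Pi.single i (x i)) = 0 :=
    hn _ fun i hi => by simp [Finset.sum_apply, Finset.sum_pi_single, hi]
  simpa [sub_eq_zero] using htail

end Slender

section HomRadical

variable (R : Type*) [Ring R] (M N X : Type*) [AddCommGroup M] [AddCommGroup N] [AddCommGroup X]
  [Module R M] [Module R N] [Module R X]

/-- The Kelly radical of the category of `R`-modules at `(M, X)`, as a submodule of `Hom(M, X)`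
over `End X`: the homomorphisms all of whose composites with homomorphisms `X → M` lie in the
Jacobson radical of `End X`. -/
def homRadical : Submodule (Module.End R X) (M →ₗ[R] X) where
  carrier := {g | ∀ f : X →ₗ[R] M, (g ∘ₗ f : Module.End R X) ∈ Ring.jacobson (Module.End R X)}
  zero_mem' _ := by simp
  add_mem' hg hg' f := by
    rw [LinearMap.add_comp]
    exact add_mem (hg f) (hg' f)
  smul_mem' a _ hg f := Ideal.mul_mem_left _ a (hg f)

/-- `Hom(M, X)` modulo the Kelly radical, a module over `End X` modulo its Jacobson radical. Its
rank is the multiplicity of `X` as a factor of a product `M` of indecomposable modules. -/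
abbrev HomModRadical : Type _ := (M →ₗ[R] X) ⧸ homRadical R M X

variable {R M N X}

theorem comp_mem_homRadical {g : M →ₗ[R] X} (hg : g ∈ homRadical R M X) (h : N →ₗ[R] M) :
    g ∘ₗ h ∈ homRadical R N X := fun f => hg (h ∘ₗ f)

theorem mem_homRadical_of_comp_mem_jacobson {g : M →ₗ[R] X}
    (hg : ∀ f : X →ₗ[R] M, (f ∘ₗ g : Module.End R M) ∈ Ring.jacobson (Module.End R M)) :
    g ∈ homRadical R M X := fun f => by
  refine mem_jacobson_iff_exists_mul_one_add_mul_eq_one.2 fun y => ?_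
  obtain ⟨w, hw⟩ := mem_jacobson_iff_exists_mul_one_add_mul_eq_one.1 (hg (f ∘ₗ y)) 1
  -- If `w` is a left inverse of `1 + f y g`, then `1 - y g w f` is one of `1 + y g f`.
  refine ⟨1 - y ∘ₗ g ∘ₗ w ∘ₗ f, LinearMap.ext fun x => ?_⟩
  have hwx : y (g (w (f x))) + y (g (w (f (y (g (f x)))))) = y (g (f x)) := by
    simpa using congrArg (y ∘ₗ g) (LinearMap.congr_fun hw (f x))
  simp only [Module.End.mul_apply, LinearMap.sub_apply, LinearMap.add_apply, Module.End.one_apply,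
    LinearMap.comp_apply, map_add]
  rw [sub_add_sub_comm, hwx, add_sub_cancel_right]

theorem isTorsionBySet_homModRadical : Module.IsTorsionBySet (Module.End R X)
    (HomModRadical R M X) (Ring.jacobson (Module.End R X)) := by
  intro g a
  obtain ⟨g, rfl⟩ := Submodule.Quotient.mk_surjective _ g
  exact (Submodule.Quotient.mk_eq_zero _).2 fun f =>
    Ideal.mul_mem_right (g ∘ₗ f : Module.End R X) _ a.2

instance : Module (Module.End R X ⧸ Ring.jacobson (Module.End R X)) (HomModRadical R M X) :=
  isTorsionBySet_homModRadical.module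

theorem mk_smul_homModRadical (a : Module.End R X) (v : HomModRadical R M X) :
    Ideal.Quotient.mk (Ring.jacobson (Module.End R X)) a • v = a • v := rfl

theorem map_congrLeft_homRadical (e : M ≃ₗ[R] N) :
    (homRadical R M X).map (e.congrLeft X (Module.End R X) : _ →ₗ[Module.End R X] _) =
      homRadical R N X := by
  ext g
  refine (Submodule.mem_map_equiv ..).trans
    ⟨fun hg => ?_, fun hg => comp_mem_homRadical hg e.toLinearMap⟩
  convert comp_mem_homRadical hg e.symm.toLinearMap
  ext
  simp

/-- Isomorphic modules have isomorphic spaces of homomorphisms to `X` modulo the Kelly radical. -/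
def homModRadicalCongr (e : M ≃ₗ[R] N) :
    HomModRadical R M X ≃ₗ[Module.End R X ⧸ Ring.jacobson (Module.End R X)]
      HomModRadical R N X :=
  let φ := Submodule.Quotient.equiv _ _ (e.congrLeft X (Module.End R X))
    (map_congrLeft_homRadical e)
  { φ with map_smul' := Ideal.Quotient.mk_surjective.forall.2 φ.map_smul }

theorem homRadical_eq_top_of_isLocalRing_end_right [IsLocalRing (Module.End R X)]
    (hM : IsIndecomposableModule R M) (h : IsEmpty (M ≃ₗ[R] X)) : homRadical R M X = ⊤ := by
  have : Nontrivial X := nontrivial_of_nontrivial_end (R := R)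
  refine eq_top_iff.2 fun g _ f => mem_jacobson_iff_not_isUnit.2 fun hu => ?_
  exact h.false (LinearEquiv.ofBijective f (hM.bijective_of_isUnit_comp hu)).symm

theorem homRadical_eq_top_of_isLocalRing_end_left [IsLocalRing (Module.End R M)]
    (hX : IsIndecomposableModule R X) (h : IsEmpty (M ≃ₗ[R] X)) : homRadical R M X = ⊤ := by
  have : Nontrivial M := nontrivial_of_nontrivial_end (R := R)
  refine eq_top_iff.2 fun g _ => mem_homRadical_of_comp_mem_jacobson fun f =>
    mem_jacobson_iff_not_isUnit.2 fun hu => ?_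
  exact h.false (LinearEquiv.ofBijective g (hX.bijective_of_isUnit_comp hu))

end HomRadical

section Products

variable {R : Type*} [Ring R] {I J : Type*} {A : I → Type*} {B : J → Type*}
  [∀ i, AddCommGroup (A i)] [∀ i, Module R (A i)]
  [∀ j, AddCommGroup (B j)] [∀ j, Module R (B j)]
  {X : Type*} [AddCommGroup X] [Module R X]

theorem IsSlender.mem_homRadical_pi_of_forall [DecidableEq I] [Countable I] (hX : IsSlender R X)
    {g : (∀ i, A i) →ₗ[R] X}
    (hg : ∀ i, g ∘ₗ LinearMap.single R A i ∈ homRadical R (A i) X) :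
    g ∈ homRadical R (∀ i, A i) X := by
  obtain ⟨s, hs⟩ := hX.exists_finset_eq_sum g
  rw [hs]
  exact sum_mem fun i _ => comp_mem_homRadical (hg i) _

theorem IsSlender.exists_linearEquiv_of_comp_eq_id [Countable I] (hX : IsSlender R X)
    (hXi : IsIndecomposableModule R X) (hA : ∀ i, IsLocalRing (Module.End R (A i)))
    {p : (∀ i, A i) →ₗ[R] X} {q : X →ₗ[R] ∀ i, A i} (hpq : p ∘ₗ q = LinearMap.id) :
    ∃ i, Nonempty (A i ≃ₗ[R] X) := by
  classical
  by_contra! hno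
  have hp : p ∈ homRadical R (∀ i, A i) X := hX.mem_homRadical_pi_of_forall fun i => by
    rw [homRadical_eq_top_of_isLocalRing_end_left hXi (hno i)]
    exact Submodule.mem_top
  have := hXi.nontrivial
  exact not_isUnit_of_mem_jacobson (hp q) (hpq ▸ isUnit_one)

/-- The projection of `∏ B j` onto a factor isomorphic to `X`, followed by a chosen isomorphism
with `X`. -/
noncomputable def projIso (j : {j // Nonempty (B j ≃ₗ[R] X)}) : (∀ j, B j) →ₗ[R] X :=
  j.2.some.toLinearMap ∘ₗ LinearMap.proj j.1

theorem linearIndependent_mk_projIso :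
    LinearIndependent (Module.End R X ⧸ Ring.jacobson (Module.End R X))
      fun j : {j // Nonempty (B j ≃ₗ[R] X)} =>
        (homRadical R (∀ j, B j) X).mkQ (projIso j) := by
  classical
  refine linearIndependent_iff'.2 fun s c hc k hk => ?_
  choose a ha using fun j => Ideal.Quotient.mk_surjective (c j)
  have hmem : ∑ j ∈ s, a j • projIso j ∈ homRadical R (∀ j, B j) X := by
    rw [← Submodule.Quotient.mk_eq_zero, ← Submodule.mkQ_apply, map_sum, ← hc]
    exact Finset.sum_congr rfl fun j _ => by rw [← ha, map_smul, mk_smul_homModRadical]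
  rw [← ha, Ideal.Quotient.eq_zero_iff_mem]
  convert hmem (LinearMap.single R B k ∘ₗ k.2.some.symm.toLinearMap)
  ext x
  have hother : ∀ j ∈ s, j ≠ k → a j (projIso j (Pi.single k.1 (k.2.some.symm x))) = 0 :=
    fun j _ hjk => by simp [projIso, Pi.single_eq_of_ne (Subtype.coe_ne_coe.2 hjk)]
  have hself : projIso k (Pi.single k.1 (k.2.some.symm x)) = x := by simp [projIso]
  simp [Finset.sum_eq_single_of_mem k hk hother, hself]

theorem IsSlender.top_le_span_mk_projIso [Countable J] [IsLocalRing (Module.End R X)]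
    (hX : IsSlender R X) (hB : ∀ j, IsIndecomposableModule R (B j)) :
    ⊤ ≤ Submodule.span (Module.End R X ⧸ Ring.jacobson (Module.End R X))
      (Set.range fun j : {j // Nonempty (B j ≃ₗ[R] X)} =>
        (homRadical R (∀ j, B j) X).mkQ (projIso j)) := by
  classical
  intro g _
  obtain ⟨g, rfl⟩ := Submodule.mkQ_surjective _ g
  obtain ⟨s, hs⟩ := hX.exists_finset_eq_sum g
  rw [hs, map_sum]
  refine sum_mem fun j _ => ?_
  by_cases hj : Nonempty (B j ≃ₗ[R] X)
  · let k : {j // Nonempty (B j ≃ₗ[R] X)} := ⟨j, hj⟩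
    let a : Module.End R X := g ∘ₗ LinearMap.single R B j ∘ₗ hj.some.symm.toLinearMap
    have hcoeff : (g ∘ₗ LinearMap.single R B j) ∘ₗ LinearMap.proj j = a • projIso k := by
      ext x
      simp [a, k, projIso]
    rw [hcoeff, map_smul, ← mk_smul_homModRadical]
    exact Submodule.smul_mem _ _ (Submodule.subset_span (Set.mem_range_self k))
  · have hrad : g ∘ₗ LinearMap.single R B j ∈ homRadical R (B j) X := by
      rw [homRadical_eq_top_of_isLocalRing_end_right (hB j) (not_nonempty_iff.1 hj)]
      exact Submodule.mem_top
    rw [Submodule.mkQ_apply, (Submodule.Quotient.mk_eq_zero _).2 (comp_mem_homRadical hrad _)]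
    exact zero_mem _

/-- The basis of `Hom(∏ B j, X)` modulo the Kelly radical given by the classes of the
`projIso j`, which is indexed by the factors isomorphic to `X`. -/
noncomputable def IsSlender.homModRadicalBasis [Countable J] [IsLocalRing (Module.End R X)]
    (hX : IsSlender R X) (hB : ∀ j, IsIndecomposableModule R (B j)) :
    Module.Basis {j // Nonempty (B j ≃ₗ[R] X)}
      (Module.End R X ⧸ Ring.jacobson (Module.End R X)) (HomModRadical R (∀ j, B j) X) :=
  Module.Basis.mk linearIndependent_mk_projIso (hX.top_le_span_mk_projIso hB)

theorem IsSlender.nonempty_equiv_isomorphic_factors [Countable I] [Countable J]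
    [IsLocalRing (Module.End R X)] (hX : IsSlender R X)
    (hA : ∀ i, IsIndecomposableModule R (A i)) (hB : ∀ j, IsIndecomposableModule R (B j))
    (e : (∀ i, A i) ≃ₗ[R] ∀ j, B j) :
    Nonempty ({i // Nonempty (A i ≃ₗ[R] X)} ≃ {j // Nonempty (B j ≃ₗ[R] X)}) :=
  ⟨((hX.homModRadicalBasis hA).map (homModRadicalCongr e)).indexEquiv (hX.homModRadicalBasis hB)⟩

end Products

theorem exists_equiv_forall_setoid_rel {α β : Type*} (s : Setoid α) (τ : β → α)
    (h : ∀ c, Nonempty ({a // s a c} ≃ {b // s (τ b) c})) : ∃ σ : α ≃ β, ∀ a, s (τ (σ a)) a := by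
  have hfib : ∀ q : Quotient s, Nonempty ({a // ⟦a⟧ = q} ≃ {b // ⟦τ b⟧ = q}) :=
    Quotient.ind fun c => by simpa only [Quotient.eq] using h c
  let w : ∀ q : Quotient s, {a // ⟦a⟧ = q} ≃ {b // ⟦τ b⟧ = q} := fun q => (hfib q).some
  exact ⟨Equiv.ofFiberEquiv w, fun a => Quotient.exact (Equiv.ofFiberEquiv_map w a)⟩

/-- If a direct product of a countable family of slender modules with local endomorphism
rings is isomorphic to a direct product of a countable family of indecomposable slender
modules, then the factors are pairwise isomorphic under a suitable bijection. -/
theorem factors_isomorphic_of_direct_products_isomorphic_slender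
    {R : Type*} [Ring R] {I J : Type*} [Countable I] [Countable J]
    (A : I → Type*) (B : J → Type*)
    [∀ i, AddCommGroup (A i)] [∀ i, Module R (A i)]
    [∀ j, AddCommGroup (B j)] [∀ j, Module R (B j)]
    (hAs : ∀ i, IsSlender R (A i)) (hAl : ∀ i, IsLocalRing (Module.End R (A i)))
    (hBs : ∀ j, IsSlender R (B j)) (hBi : ∀ j, IsIndecomposableModule R (B j))
    (h : Nonempty (((i : I) → A i) ≃ₗ[R] ((j : J) → B j))) :
    ∃ σ : I ≃ J, ∀ i, Nonempty (A i ≃ₗ[R] B (σ i)) := by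
  classical
  obtain ⟨e⟩ := h
  have hAi : ∀ i, IsIndecomposableModule R (A i) := fun i =>
    have := hAl i
    isIndecomposableModule_of_isLocalRing_end
  have hretract : ∀ j, (LinearMap.proj j ∘ₗ e.toLinearMap) ∘ₗ
      (e.symm.toLinearMap ∘ₗ LinearMap.single R B j) = LinearMap.id := fun j => by
    ext x
    simp
  choose τ hτ using fun j => (hBs j).exists_linearEquiv_of_comp_eq_id (hBi j) hAl (hretract j)
  let iso : Setoid I :=
    { r := fun i k => Nonempty (A i ≃ₗ[R] A k)
      iseqv := ⟨fun i => ⟨.refl R _⟩, fun ⟨f⟩ => ⟨f.symm⟩, fun ⟨f⟩ ⟨g⟩ => ⟨f.trans g⟩⟩ }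
  have hmult : ∀ k, Nonempty ({i // iso i k} ≃ {j // iso (τ j) k}) := fun k => by
    have := hAl k
    obtain ⟨w⟩ := (hAs k).nonempty_equiv_isomorphic_factors hAi hBi e
    exact ⟨w.trans (Equiv.subtypeEquivRight fun j =>
      ⟨fun ⟨g⟩ => ⟨(hτ j).some.trans g⟩, fun ⟨g⟩ => ⟨(hτ j).some.symm.trans g⟩⟩)⟩
  obtain ⟨σ, hσ⟩ := exists_equiv_forall_setoid_rel iso τ hmult
  exact ⟨σ, fun i => ⟨(hσ i).some.symm.trans (hτ (σ i)).some⟩⟩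
end
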